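/- arXiv:1707.05216 — 2 statements merged into one kernel-verified Lean document; each statement's English description precedes it below -/
import Mathlib

section
/- Let {θ_m}_{m≥1} be a sequence of real numbers with 0 ≤ θ_m < 1 for all m and lim_{m→∞} m·θ_m = 0. Then there exists M ∈ ℕ such that for all integers m ≥ M, the sign of J_ν′(z;q²) evaluated at z = q^{−m+θ_m} equals (−1)^m, i.e., (−1)^m · J_ν′(q^{−m+θ_m};q²) > 0. -/
/-!
Write `x = q²` and `b_k = 1 / ((q^{2(ν+1)};x)_k (x;x)_k)`. Up to a positive factor, `J_ν'(z;q²)` is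
`S(w) = ∑_k (-1)^k (ν + 2k) q^{k(k+1)} w^k b_k` at `w = z²` (`deriv_qBessel`). For
`z = q^{-m+θ}` this is `w = u x^{-m}` with `u = q^{2θ}`, and the exponents of `q` at the indices
`k = m + j` and `k = m - 1 - j` agree when `u = 1`, while the signs are opposite. Pairing these terms
therefore cancels the contribution of order `m`, and since `b_k` converges geometrically to a limit
`B > 0` and `m (1 - u) → 0`, what survives is
`(-1)^m q^{m(m-1)} u^{-m} S(w) → 2 B ∑_j (-1)^j (2j+1) q^{j(j+1)}` (`wser_tendsto`, resting on
the estimate `bracket_bound`). The index `m` is written `n + 1` throughout.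

It remains to see that `L = ∑_j (-1)^j (2j+1) q^{j(j+1)}` is positive, which is a consequence of
Jacobi's formula `L = (x;x)_∞³`. Instead of that formula, the same asymptotics is applied to the
simpler sequence `b_k = 1 / (x;x)_k`, for which `∑ (-1)^k q^{k(k+1)} w^k b_k` satisfies a first-order
functional equation (`wser_recurrence`); this gives the derivative at `w = x^{-m}` in closed form, with
a visibly positive normalized limit (`jacobiConst_pos`).
-/

open Filter

/-- The finite q-shifted factorial `(a;q)_n`. -/
noncomputable def qPoch (a q : ℝ) : ℕ → ℝ := fun n => ∏ j ∈ Finset.range n, (1 - a * q ^ j)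

/-- The infinite q-shifted factorial `(a;q)_∞`. -/
noncomputable def qPochInf (a q : ℝ) : ℝ := ∏' j : ℕ, (1 - a * q ^ j)

/-- The third Jackson (Hahn–Exton) q-Bessel function `J_ν(z;q²)` (base `q²`). -/
noncomputable def qBessel (ν q z : ℝ) : ℝ :=
  z ^ ν * (qPochInf (q ^ (2 * (ν + 1))) (q ^ 2) / qPochInf (q ^ 2) (q ^ 2)) *
    ∑' k : ℕ, ((-1 : ℝ) ^ k * q ^ (k * (k + 1)) * z ^ (2 * k) /
      (qPoch (q ^ (2 * (ν + 1))) (q ^ 2) k * qPoch (q ^ 2) (q ^ 2) k))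


/-! ### q-shifted factorials -/

/-- `b` converges to `B` at the geometric rate `x ^ k`; the constant `K` also bounds `b`. -/
def GeomConv (b : ℕ → ℝ) (B K x : ℝ) : Prop :=
  ∀ k, |b k - B| ≤ K * x ^ k ∧ |b k| ≤ K

lemma GeomConv.limit_le {b : ℕ → ℝ} {B K x : ℝ} (h : GeomConv b B K x) (hx0 : 0 < x)
    (hx1 : x < 1) : |B| ≤ K := by
  have hK : Tendsto (fun k : ℕ => K * x ^ k) atTop (nhds 0) := by
    simpa using (tendsto_pow_atTop_nhds_zero_of_lt_one hx0.le hx1).const_mul K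
  have hb : Tendsto b atTop (nhds B) := by
    rw [tendsto_iff_norm_sub_tendsto_zero]
    exact squeeze_zero (fun k => norm_nonneg _) (fun k => (h k).1) hK
  exact le_of_tendsto' hb.abs fun k => (h k).2

lemma GeomConv.mul {b b' : ℕ → ℝ} {B B' K K' x : ℝ} (h : GeomConv b B K x)
    (h' : GeomConv b' B' K' x) (hx0 : 0 < x) (hx1 : x < 1) :
    GeomConv (fun k => b k * b' k) (B * B') (2 * (K * K')) x := by
  have hB := h.limit_le hx0 hx1
  intro k
  obtain ⟨h1, h2⟩ := h k
  obtain ⟨h1', h2'⟩ := h' k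
  have hK : 0 ≤ K := (abs_nonneg _).trans h2
  have hK' : 0 ≤ K' := (abs_nonneg _).trans h2'
  constructor
  · have e : b k * b' k - B * B' = (b k - B) * b' k + B * (b' k - B') := by ring
    calc |b k * b' k - B * B'| ≤ |b k - B| * |b' k| + |B| * |b' k - B'| := by
          rw [e, ← abs_mul, ← abs_mul]; exact abs_add_le _ _
      _ ≤ (K * x ^ k) * K' + K * (K' * x ^ k) := by gcongr
      _ = _ := by ring
  · rw [abs_mul]
    have : |b k| * |b' k| ≤ K * K' := by gcongr
    nlinarith [mul_nonneg hK hK']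

lemma qPoch_succ (a x : ℝ) (n : ℕ) : qPoch a x (n + 1) = qPoch a x n * (1 - a * x ^ n) := by
  simp [qPoch, Finset.prod_range_succ]

lemma factor_pos {a x : ℝ} (ha0 : 0 < a) (ha1 : a < 1) (hx0 : 0 < x) (hx1 : x < 1) (n : ℕ) :
    0 < 1 - a * x ^ n := by
  have : x ^ n ≤ 1 := pow_le_one₀ hx0.le hx1.le
  nlinarith

lemma qPoch_pos {a x : ℝ} (ha0 : 0 < a) (ha1 : a < 1) (hx0 : 0 < x) (hx1 : x < 1) (n : ℕ) :
    0 < qPoch a x n :=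
  Finset.prod_pos fun j _ => factor_pos ha0 ha1 hx0 hx1 j

lemma qPoch_le_one {a x : ℝ} (ha0 : 0 < a) (ha1 : a < 1) (hx0 : 0 < x) (hx1 : x < 1) (n : ℕ) :
    qPoch a x n ≤ 1 :=
  Finset.prod_le_one (fun j _ => (factor_pos ha0 ha1 hx0 hx1 j).le) fun j _ => by
    have : 0 < a * x ^ j := by positivity
    linarith

lemma qPoch_antitone {a x : ℝ} (ha0 : 0 < a) (ha1 : a < 1) (hx0 : 0 < x) (hx1 : x < 1) :
    Antitone (qPoch a x) := by
  refine antitone_nat_of_succ_le fun n => ?_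
  rw [qPoch_succ]
  have h1 := qPoch_pos ha0 ha1 hx0 hx1 n
  have : 0 < a * x ^ n := by positivity
  nlinarith [mul_pos h1 this]

lemma qPoch_tendsto {a x : ℝ} (hx0 : 0 < x) (hx1 : x < 1) :
    Tendsto (qPoch a x) atTop (nhds (qPochInf a x)) := by
  have hs : Summable fun j : ℕ => ‖-(a * x ^ j)‖ :=
    (((summable_geometric_of_lt_one hx0.le hx1).mul_left a).neg).norm
  have := (multipliable_one_add_of_summable hs).tendsto_prod_tprod_nat
  refine Tendsto.congr (fun n => ?_) (by simpa [qPochInf, sub_eq_add_neg] using this)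
  simp [qPoch, sub_eq_add_neg]

lemma qPochInf_pos {a x : ℝ} (ha0 : 0 < a) (ha1 : a < 1) (hx0 : 0 < x) (hx1 : x < 1) :
    0 < qPochInf a x := by
  have h0 : 0 ≤ qPochInf a x :=
    ge_of_tendsto' (qPoch_tendsto hx0 hx1) fun n => (qPoch_pos ha0 ha1 hx0 hx1 n).le
  have hs : Summable fun j : ℕ => ‖-(a * x ^ j)‖ :=
    (((summable_geometric_of_lt_one hx0.le hx1).mul_left a).neg).norm
  have hne := tprod_one_add_ne_zero_of_summable
    (fun i => by simpa [sub_eq_add_neg] using (factor_pos ha0 ha1 hx0 hx1 i).ne') hs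
  refine lt_of_le_of_ne h0 (Ne.symm ?_)
  simpa [qPochInf, sub_eq_add_neg] using hne

lemma qPochInf_le {a x : ℝ} (ha0 : 0 < a) (ha1 : a < 1) (hx0 : 0 < x) (hx1 : x < 1) (n : ℕ) :
    qPochInf a x ≤ qPoch a x n :=
  (qPoch_antitone ha0 ha1 hx0 hx1).le_of_tendsto (qPoch_tendsto hx0 hx1) n

lemma qPoch_sub_le {a x : ℝ} (ha0 : 0 < a) (ha1 : a < 1) (hx0 : 0 < x) (hx1 : x < 1) (n : ℕ) :
    qPoch a x n - qPochInf a x ≤ x ^ n / (1 - x) := by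
  -- `(a;x)_n - x^n / (1 - x)` is nondecreasing, since consecutive `(a;x)_n` differ by at most `x^n`.
  have hx : 0 < 1 - x := by linarith
  have hmono : Monotone fun n => qPoch a x n - x ^ n / (1 - x) := by
    refine monotone_nat_of_le_succ fun n => ?_
    have e : x ^ n / (1 - x) - x ^ (n + 1) / (1 - x) = x ^ n := by
      field_simp; ring
    have h1 := qPoch_le_one ha0 ha1 hx0 hx1 n
    have h2 := qPoch_pos ha0 ha1 hx0 hx1 n
    have h3 : 0 < x ^ n := by positivity
    have h4 : qPoch a x n * a ≤ 1 := by nlinarith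
    rw [qPoch_succ]
    nlinarith [mul_le_mul_of_nonneg_right h4 h3.le]
  have hlim : Tendsto (fun n => qPoch a x n - x ^ n / (1 - x)) atTop (nhds (qPochInf a x)) := by
    simpa using (qPoch_tendsto (a := a) hx0 hx1).sub
      ((tendsto_pow_atTop_nhds_zero_of_lt_one hx0.le hx1).div_const (1 - x))
  have := hmono.ge_of_tendsto hlim n
  linarith

lemma geomConv_qPoch_inv {a x : ℝ} (ha0 : 0 < a) (ha1 : a < 1) (hx0 : 0 < x) (hx1 : x < 1) :
    ∃ K, GeomConv (fun k => (qPoch a x k)⁻¹) (qPochInf a x)⁻¹ K x := by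
  set P := qPochInf a x with hP
  have hPpos : 0 < P := qPochInf_pos ha0 ha1 hx0 hx1
  have hx : 0 < 1 - x := by linarith
  refine ⟨max P⁻¹ ((1 - x)⁻¹ * (P⁻¹ * P⁻¹)), fun k => ⟨?_, ?_⟩⟩
  · have hk := qPoch_pos ha0 ha1 hx0 hx1 k
    have hle := qPochInf_le ha0 ha1 hx0 hx1 k
    have hs := qPoch_sub_le ha0 ha1 hx0 hx1 k
    rw [← hP] at hle hs
    have e : (qPoch a x k)⁻¹ - P⁻¹ = -((qPoch a x k - P) * ((qPoch a x k)⁻¹ * P⁻¹)) := by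
      field_simp; ring
    have hi : (qPoch a x k)⁻¹ ≤ P⁻¹ := inv_anti₀ hPpos hle
    calc |(qPoch a x k)⁻¹ - P⁻¹| = (qPoch a x k - P) * ((qPoch a x k)⁻¹ * P⁻¹) := by
          rw [e, abs_neg, abs_of_nonneg]
          exact mul_nonneg (by linarith) (by positivity)
      _ ≤ (x ^ k / (1 - x)) * (P⁻¹ * P⁻¹) := by gcongr
      _ = ((1 - x)⁻¹ * (P⁻¹ * P⁻¹)) * x ^ k := by ring
      _ ≤ _ := by gcongr; exact le_max_right _ _
  · have hk := qPoch_pos ha0 ha1 hx0 hx1 k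
    rw [abs_of_pos (inv_pos.2 hk)]
    exact (inv_anti₀ hPpos (qPochInf_le ha0 ha1 hx0 hx1 k)).trans (le_max_left _ _)

/-! ### The series with linear weights -/

/-- The `k`-th term of the alternating series `wser`. -/
noncomputable def wterm (b : ℕ → ℝ) (q α β w : ℝ) (k : ℕ) : ℝ :=
  (-1) ^ k * (α + β * k) * q ^ (k * (k + 1)) * w ^ k * b k

/-- The series `∑ (-1)^k (α + β k) q^{k(k+1)} w^k b_k`. The q-Bessel series is the case `α = 1`,
`β = 0`, `w = z²`, and `z J_ν'(z)` leads to `α = ν`, `β = 2`. -/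
noncomputable def wser (b : ℕ → ℝ) (q α β w : ℝ) : ℝ := ∑' k, wterm b q α β w k

/-- The quadratic exponent makes the series converge for every `R`. -/
lemma summable_quad {q : ℝ} (hq0 : 0 < q) (hq1 : q < 1) (R : ℝ) (hR : 0 ≤ R) :
    Summable fun k : ℕ => ((k : ℝ) + 1) ^ 2 * q ^ (k * (k + 1)) * R ^ k := by
  have hs : Summable fun k : ℕ => ((k : ℝ) + 1) ^ 2 * (1 / 2 : ℝ) ^ k := by
    have h2 := summable_pow_mul_geometric_of_norm_lt_one 2 (r := (1 / 2 : ℝ)) (by norm_num)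
    have h1 := summable_pow_mul_geometric_of_norm_lt_one 1 (r := (1 / 2 : ℝ)) (by norm_num)
    have h0 := summable_pow_mul_geometric_of_norm_lt_one 0 (r := (1 / 2 : ℝ)) (by norm_num)
    refine ((h2.add (h1.mul_left 2)).add h0).congr fun k => ?_
    ring
  refine Summable.of_norm_bounded_eventually_nat hs ?_
  have ht : Tendsto (fun k : ℕ => q ^ (k + 1) * R) atTop (nhds 0) := by
    simpa using ((tendsto_pow_atTop_nhds_zero_of_lt_one hq0.le hq1).comp
      (tendsto_add_atTop_nat 1)).mul_const R
  filter_upwards [ht.eventually (ge_mem_nhds (by norm_num : (0 : ℝ) < 1 / 2))] with k hk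
  rw [Real.norm_of_nonneg (by positivity), mul_comm k, pow_mul, mul_assoc, ← mul_pow]
  gcongr

lemma summable_wterm {b : ℕ → ℝ} {K : ℝ} (hb : ∀ k, |b k| ≤ K) {q : ℝ} (hq0 : 0 < q)
    (hq1 : q < 1) (α β w : ℝ) : Summable (wterm b q α β w) := by
  refine Summable.of_norm_bounded
    ((summable_quad hq0 hq1 |w| (abs_nonneg w)).mul_left ((|α| + |β|) * K)) fun k => ?_
  have h1 : |α + β * k| ≤ (|α| + |β|) * ((k : ℝ) + 1) ^ 2 := by
    have : |β * (k : ℝ)| = |β| * k := by rw [abs_mul, Nat.abs_cast]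
    have h := abs_add_le α (β * k)
    have hk : (0 : ℝ) ≤ k := k.cast_nonneg
    nlinarith [abs_nonneg α, abs_nonneg β, mul_nonneg (abs_nonneg α) hk,
      mul_nonneg (abs_nonneg β) hk, mul_nonneg (mul_nonneg (abs_nonneg α) hk) hk,
      mul_nonneg (mul_nonneg (abs_nonneg β) hk) hk]
  have hK : 0 ≤ K := (abs_nonneg _).trans (hb 0)
  rw [Real.norm_eq_abs, wterm, abs_mul, abs_mul, abs_mul, abs_mul, abs_pow, abs_pow w, abs_neg,
    abs_one, one_pow, one_mul, abs_of_pos (by positivity : 0 < q ^ (k * (k + 1)))]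
  calc |α + β * k| * q ^ (k * (k + 1)) * |w| ^ k * |b k|
      ≤ ((|α| + |β|) * ((k : ℝ) + 1) ^ 2) * q ^ (k * (k + 1)) * |w| ^ k * K := by
        gcongr; exact hb k
    _ = _ := by ring

/-- Folding a series at `n`: the index `n + 1 + j` is paired with `n - j`. -/
lemma tsum_fold {f : ℕ → ℝ} (hf : Summable f) (n : ℕ) :
    HasSum (fun j => f (j + (n + 1)) + if j ≤ n then f (n - j) else 0) (∑' k, f k) := by
  have h1 : HasSum (fun j => f (j + (n + 1))) (∑' j, f (j + (n + 1))) :=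
    ((summable_nat_add_iff (n + 1)).2 hf).hasSum
  have h2 : HasSum (fun j => if j ≤ n then f (n - j) else 0)
      (∑ j ∈ Finset.range (n + 1), if j ≤ n then f (n - j) else 0) :=
    hasSum_sum_of_ne_finset_zero fun j hj => by
      rw [Finset.mem_range, not_lt] at hj
      rw [if_neg (by omega)]
  have h3 : (∑ j ∈ Finset.range (n + 1), if j ≤ n then f (n - j) else 0)
      = ∑ j ∈ Finset.range (n + 1), f j := by
    rw [← Finset.sum_range_reflect f (n + 1)]
    refine Finset.sum_congr rfl fun j hj => ?_
    rw [Finset.mem_range] at hj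
    rw [if_pos (by omega)]
    congr 1
  rw [h3] at h2
  have := h1.add h2
  rwa [add_comm (∑' j, f (j + (n + 1))), hf.sum_add_tsum_nat_add] at this

/-- The bracket multiplying `(-1)^j q^{j(j+1)}` after folding at `n` and normalizing, when
`w = u q^{-2(n+1)}`. -/
noncomputable def bracket (b : ℕ → ℝ) (α u : ℝ) (n j : ℕ) : ℝ :=
  (α + 2 * ((j : ℝ) + (n + 1))) * (u ^ j * b (j + (n + 1))) -
    if j ≤ n then (α + 2 * ((n : ℝ) - j)) * ((u ^ (j + 1))⁻¹ * b (n - j)) else 0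

/-- The limiting constant `∑ (-1)^j (2j+1) q^{j(j+1)}` (equal to `(q²;q²)_∞³` by Jacobi). -/
noncomputable def jacobiConst (q : ℝ) : ℝ :=
  ∑' j : ℕ, (-1 : ℝ) ^ j * q ^ (j * (j + 1)) * (2 * j + 1)

lemma hasSum_bracket {b : ℕ → ℝ} {K : ℝ} (hb : ∀ k, |b k| ≤ K) {q : ℝ} (hq0 : 0 < q)
    (hq1 : q < 1) (α : ℝ) {u : ℝ} (hu : 0 < u) (n : ℕ) :
    HasSum (fun j : ℕ => (-1 : ℝ) ^ j * q ^ (j * (j + 1)) * bracket b α u n j)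
      ((-1) ^ (n + 1) * q ^ ((n + 1) * n) * (u ^ (n + 1))⁻¹ *
        wser b q α 2 (u * ((q ^ 2) ^ (n + 1))⁻¹)) := by
  have h := (tsum_fold (summable_wterm hb hq0 hq1 α 2 (u * ((q ^ 2) ^ (n + 1))⁻¹)) n).mul_left
    ((-1) ^ (n + 1) * q ^ ((n + 1) * n) * (u ^ (n + 1))⁻¹)
  convert! h using 1
  funext j
  have hq : q ≠ 0 := hq0.ne'
  have hu' : u ≠ 0 := hu.ne'
  have upper : (-1) ^ (n + 1) * q ^ ((n + 1) * n) * (u ^ (n + 1))⁻¹ *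
      wterm b q α 2 (u * ((q ^ 2) ^ (n + 1))⁻¹) (j + (n + 1)) =
      (-1 : ℝ) ^ j * q ^ (j * (j + 1)) *
        ((α + 2 * ((j : ℝ) + (n + 1))) * (u ^ j * b (j + (n + 1)))) := by
    have s : ((-1 : ℝ) ^ (n + 1)) * (-1) ^ (j + (n + 1)) = (-1) ^ j := by
      rw [pow_add (-1 : ℝ) j, mul_left_comm, ← mul_pow]; simp
    have p : q ^ ((n + 1) * n) * q ^ ((j + (n + 1)) * (j + (n + 1) + 1)) =
        q ^ (j * (j + 1)) * ((q ^ 2) ^ (n + 1)) ^ (j + (n + 1)) := by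
      rw [← pow_mul, ← pow_mul, ← pow_add, ← pow_add]; congr 1; ring
    rw [wterm, mul_pow, inv_pow, ← s, pow_add u j]
    push_cast
    have hd : ((q ^ 2) ^ (n + 1)) ^ (j + (n + 1)) ≠ 0 := by positivity
    have hd' : u ^ (n + 1) ≠ 0 := by positivity
    generalize ((q ^ 2) ^ (n + 1)) ^ (j + (n + 1)) = d at *
    generalize u ^ (n + 1) = e at *
    field_simp
    linear_combination ((α + 2 * ((j : ℝ) + (n + 1))) * b (j + (n + 1))) * p
  have lower : j ≤ n → (-1) ^ (n + 1) * q ^ ((n + 1) * n) * (u ^ (n + 1))⁻¹ *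
      wterm b q α 2 (u * ((q ^ 2) ^ (n + 1))⁻¹) (n - j) =
      -((-1 : ℝ) ^ j * q ^ (j * (j + 1)) *
        ((α + 2 * ((n : ℝ) - j)) * ((u ^ (j + 1))⁻¹ * b (n - j)))) := by
    intro hjn
    obtain ⟨k, rfl⟩ := Nat.exists_eq_add_of_le hjn
    rw [Nat.add_sub_cancel_left]
    have s : ((-1 : ℝ) ^ (j + k + 1)) * (-1) ^ k = -(-1) ^ j := by
      rw [pow_succ, pow_add, mul_right_comm, mul_assoc ((-1 : ℝ) ^ j), ← mul_pow]; simp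
    have p : q ^ ((j + k + 1) * (j + k)) * q ^ (k * (k + 1)) =
        q ^ (j * (j + 1)) * ((q ^ 2) ^ (j + k + 1)) ^ k := by
      rw [← pow_mul, ← pow_mul, ← pow_add, ← pow_add]; congr 1; ring
    rw [wterm, mul_pow, inv_pow, show j + k + 1 = (j + 1) + k by ring, pow_add u (j + 1),
      show (j + 1) + k = j + k + 1 by ring]
    push_cast
    have hd : ((q ^ 2) ^ (j + k + 1)) ^ k ≠ 0 := by positivity
    have hd1 : u ^ (j + 1) ≠ 0 := by positivity
    have hd2 : u ^ k ≠ 0 := by positivity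
    generalize ((q ^ 2) ^ (j + k + 1)) ^ k = d at *
    generalize u ^ (j + 1) = e at *
    generalize u ^ k = f at *
    have s' : (-1 : ℝ) ^ j = -(((-1 : ℝ) ^ (j + k + 1)) * (-1) ^ k) := by rw [s]; ring
    rw [s']
    field_simp
    linear_combination ((α + 2 * (k : ℝ)) * b k) * p
  rw [mul_add ((-1) ^ (n + 1) * q ^ ((n + 1) * n) * (u ^ (n + 1))⁻¹), upper, bracket]
  split_ifs with hjn
  · rw [lower hjn]; ring
  · ring


/-- Bernoulli's inequality in the form used below. -/
lemma abs_pow_sub_one_le {u : ℝ} (hu0 : 0 < u) (hu1 : u ≤ 1) (i : ℕ) :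
    |u ^ i - 1| ≤ i * (1 - u) := by
  have h1 := one_add_mul_sub_le_pow (by linarith : -1 ≤ u) i
  have h2 : u ^ i ≤ 1 := pow_le_one₀ hu0.le hu1
  have h3 : (0 : ℝ) ≤ i := i.cast_nonneg
  rw [abs_of_nonpos (by linarith)]
  linarith

lemma upper_bound {b : ℕ → ℝ} {B K x : ℝ} (h : GeomConv b B K x) (hx0 : 0 < x)
    (hx1 : x < 1) (α : ℝ) {u : ℝ} (hux : x ≤ u) (hu1 : u ≤ 1) (n j : ℕ) :
    |(α + 2 * ((j : ℝ) + (n + 1))) * (u ^ j * b (j + (n + 1)) - B)| ≤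
      (2 + |α|) * K * (((n : ℝ) + 1) * (x ^ (n + 1) + (1 - u))) * ((j : ℝ) + 1) ^ 2 := by
  have hB := h.limit_le hx0 hx1
  have hK : 0 ≤ K := (abs_nonneg _).trans hB
  have hu0 : 0 < u := hx0.trans_le hux
  have hxn : 0 < x ^ (n + 1) := by positivity
  have hu1' : 0 ≤ 1 - u := by linarith
  have hj0 : (0 : ℝ) ≤ j := j.cast_nonneg
  have hn0 : (0 : ℝ) ≤ n := n.cast_nonneg
  have hα0 := abs_nonneg α
  have c1 : |α + 2 * ((j : ℝ) + (n + 1))| ≤ (2 + |α|) * ((n + 1) * (j + 1)) := by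
    refine (abs_add_le _ _).trans ?_
    rw [abs_of_nonneg (by positivity : 0 ≤ 2 * ((j : ℝ) + (n + 1)))]
    nlinarith [mul_nonneg hn0 hj0, mul_nonneg hα0 hn0, mul_nonneg hα0 hj0,
      mul_nonneg hα0 (mul_nonneg hn0 hj0)]
  have c2 : |u ^ j * b (j + (n + 1)) - B| ≤
      K * (((j : ℝ) + 1) * (x ^ (n + 1) + (1 - u))) := by
    have e : u ^ j * b (j + (n + 1)) - B =
      u ^ j * (b (j + (n + 1)) - B) + (u ^ j - 1) * B := by ring
    have f1 : |u ^ j| ≤ 1 := by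
      rw [abs_of_pos (by positivity)]; exact pow_le_one₀ hu0.le hu1
    have f2 : |b (j + (n + 1)) - B| ≤ K * x ^ (n + 1) := by
      refine (h _).1.trans (mul_le_mul_of_nonneg_left ?_ hK)
      exact pow_le_pow_of_le_one hx0.le hx1.le (Nat.le_add_left _ _)
    have f3 := abs_pow_sub_one_le hu0 hu1 j
    calc |u ^ j * b (j + (n + 1)) - B|
        ≤ |u ^ j| * |b (j + (n + 1)) - B| + |u ^ j - 1| * |B| := by
          rw [e, ← abs_mul, ← abs_mul]; exact abs_add_le _ _
      _ ≤ 1 * (K * x ^ (n + 1)) + (j * (1 - u)) * K := by gcongr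
      _ = K * (x ^ (n + 1) + j * (1 - u)) := by ring
      _ ≤ _ := by
          gcongr
          nlinarith [mul_nonneg hj0 hxn.le]
  rw [abs_mul]
  calc _ ≤ ((2 + |α|) * ((n + 1) * (j + 1))) *
          (K * (((j : ℝ) + 1) * (x ^ (n + 1) + (1 - u)))) := by gcongr
    _ = _ := by ring

lemma lower_bound {b : ℕ → ℝ} {B K x : ℝ} (h : GeomConv b B K x) (hx0 : 0 < x)
    (hx1 : x < 1) (α : ℝ) {u : ℝ} (hux : x ≤ u) (hu1 : u ≤ 1) {n j : ℕ} (hjn : j ≤ n) :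
    |(α + 2 * ((n : ℝ) - j)) * ((u ^ (j + 1))⁻¹ * b (n - j) - B)| ≤
      (2 + |α|) * K * (((n : ℝ) + 1) * (x ^ (n + 1) + (1 - u))) *
        (((j : ℝ) + 1) * ((x ^ (j + 1))⁻¹ * (x ^ (j + 1))⁻¹)) := by
  have hB := h.limit_le hx0 hx1
  have hK : 0 ≤ K := (abs_nonneg _).trans hB
  have hu0 : 0 < u := hx0.trans_le hux
  have hxn : 0 < x ^ (n + 1) := by positivity
  have hu1' : 0 ≤ 1 - u := by linarith
  have hj0 : (0 : ℝ) ≤ j := j.cast_nonneg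
  have hn0 : (0 : ℝ) ≤ n := n.cast_nonneg
  have hα0 := abs_nonneg α
  have hz1 : 1 ≤ (x ^ (j + 1))⁻¹ :=
    (one_le_inv₀ (by positivity)).2 (pow_le_one₀ hx0.le hx1.le)
  have hjn' : (j : ℝ) ≤ n := by exact_mod_cast hjn
  have c1 : |α + 2 * ((n : ℝ) - j)| ≤ (2 + |α|) * (n + 1) := by
    refine (abs_add_le _ _).trans ?_
    rw [abs_of_nonneg (by linarith : 0 ≤ 2 * ((n : ℝ) - j))]
    nlinarith [mul_nonneg hα0 hn0]
  have e : (u ^ (j + 1))⁻¹ * b (n - j) - B =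
      (u ^ (j + 1))⁻¹ * ((b (n - j) - B) - (u ^ (j + 1) - 1) * B) := by
    field_simp; ring
  have hxk : x ^ (n - j) = x ^ (n + 1) * (x ^ (j + 1))⁻¹ := by
    rw [eq_mul_inv_iff_mul_eq₀ (by positivity), ← pow_add]; congr 1; omega
  have f1 : |b (n - j) - B| ≤ K * (x ^ (n + 1) * (x ^ (j + 1))⁻¹) := by
    rw [← hxk]; exact (h _).1
  have f2 := abs_pow_sub_one_le hu0 hu1 (j + 1)
  push_cast at f2
  have c3 : |(b (n - j) - B) - (u ^ (j + 1) - 1) * B| ≤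
      K * (((j : ℝ) + 1) * (x ^ (n + 1) + (1 - u))) * (x ^ (j + 1))⁻¹ := by
    calc _ ≤ |b (n - j) - B| + |u ^ (j + 1) - 1| * |B| := by
          rw [← abs_mul]; exact abs_sub _ _
      _ ≤ K * (x ^ (n + 1) * (x ^ (j + 1))⁻¹) + (((j : ℝ) + 1) * (1 - u)) * K * 1 := by
          rw [mul_one]; gcongr
      _ ≤ K * (x ^ (n + 1) * (x ^ (j + 1))⁻¹) +
          (((j : ℝ) + 1) * (1 - u)) * K * (x ^ (j + 1))⁻¹ := by gcongr
      _ = K * (x ^ (n + 1) + ((j : ℝ) + 1) * (1 - u)) * (x ^ (j + 1))⁻¹ := by ring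
      _ ≤ _ := by
          gcongr
          nlinarith [mul_nonneg hj0 hxn.le]
  have c2 : |(u ^ (j + 1))⁻¹ * b (n - j) - B| ≤
      (x ^ (j + 1))⁻¹ * (K * (((j : ℝ) + 1) * (x ^ (n + 1) + (1 - u))) * (x ^ (j + 1))⁻¹) := by
    rw [e, abs_mul, abs_of_pos (by positivity)]
    gcongr
  rw [abs_mul]
  calc _ ≤ ((2 + |α|) * (n + 1)) * _ := mul_le_mul c1 c2 (abs_nonneg _) (by positivity)
    _ = _ := by ring

/-- When `j > n` the partner of the index `n + 1 + j` is missing; the factor `x^{n+1}` gained from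
`j > n` makes up for it. -/
lemma missing_bound {B K x : ℝ} (hB : |B| ≤ K) (hx0 : 0 < x)
    (hx1 : x < 1) (α : ℝ) {u : ℝ} (hu1 : u ≤ 1) {n j : ℕ} (hjn : n < j) :
    |(α + 2 * ((n : ℝ) - j)) * B| ≤
      (2 + |α|) * K * (((n : ℝ) + 1) * (x ^ (n + 1) + (1 - u))) *
        (((j : ℝ) + 1) * ((x ^ (j + 1))⁻¹ * (x ^ (j + 1))⁻¹)) := by
  have hK : 0 ≤ K := (abs_nonneg _).trans hB
  have hu1' : 0 ≤ 1 - u := by linarith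
  have hj0 : (0 : ℝ) ≤ j := j.cast_nonneg
  have hn0 : (0 : ℝ) ≤ n := n.cast_nonneg
  have hα0 := abs_nonneg α
  have hz1 : 1 ≤ (x ^ (j + 1))⁻¹ :=
    (one_le_inv₀ (by positivity)).2 (pow_le_one₀ hx0.le hx1.le)
  have hjn' : (n : ℝ) ≤ j := by exact_mod_cast hjn.le
  have c1 : |α + 2 * ((n : ℝ) - j)| ≤ (2 + |α|) * (j + 1) := by
    refine (abs_add_le _ _).trans ?_
    rw [abs_of_nonpos (by linarith : 2 * ((n : ℝ) - j) ≤ 0)]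
    nlinarith [mul_nonneg hα0 hj0]
  have hp : x ^ (j + 1) ≤ x ^ (n + 1) + (1 - u) := by
    have : x ^ (j + 1) ≤ x ^ (n + 1) := pow_le_pow_of_le_one hx0.le hx1.le (by omega)
    linarith
  have c2 : 1 ≤ (x ^ (n + 1) + (1 - u)) * ((x ^ (j + 1))⁻¹ * (x ^ (j + 1))⁻¹) := by
    calc (1 : ℝ) = x ^ (j + 1) * ((x ^ (j + 1))⁻¹ * 1) := by field_simp
      _ ≤ _ := by gcongr
  rw [abs_mul]
  calc _ ≤ ((2 + |α|) * (j + 1)) * K := by gcongr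
    _ = (2 + |α|) * K * ((j : ℝ) + 1) * (1 * 1) := by ring
    _ ≤ (2 + |α|) * K * ((j : ℝ) + 1) * (((n : ℝ) + 1) *
        ((x ^ (n + 1) + (1 - u)) * ((x ^ (j + 1))⁻¹ * (x ^ (j + 1))⁻¹))) := by
          gcongr
          linarith
    _ = _ := by ring

/-- The key estimate: pairing leaves `(4j + 2) B`, up to an error that is `O((n+1) ε)` with
`ε = x^{n+1} + (1 - u)`. -/
lemma bracket_bound {b : ℕ → ℝ} {B K x : ℝ} (h : GeomConv b B K x) (hx0 : 0 < x)
    (hx1 : x < 1) (α : ℝ) {u : ℝ} (hux : x ≤ u) (hu1 : u ≤ 1) (n j : ℕ) :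
    |bracket b α u n j - (4 * j + 2) * B| ≤
      2 * (2 + |α|) * K * (((n : ℝ) + 1) * (x ^ (n + 1) + (1 - u))) *
        (((j : ℝ) + 1) ^ 2 * ((x ^ (j + 1))⁻¹ * (x ^ (j + 1))⁻¹)) := by
  have hB := h.limit_le hx0 hx1
  have hK : 0 ≤ K := (abs_nonneg _).trans hB
  have hu1' : 0 ≤ 1 - u := by linarith
  have hz1 : 1 ≤ (x ^ (j + 1))⁻¹ :=
    (one_le_inv₀ (by positivity)).2 (pow_le_one₀ hx0.le hx1.le)
  have hj0 : (0 : ℝ) ≤ j := j.cast_nonneg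
  set A := (2 + |α|) * K * (((n : ℝ) + 1) * (x ^ (n + 1) + (1 - u))) with hA
  have hA0 : 0 ≤ A := by positivity
  set y := (x ^ (j + 1))⁻¹ * (x ^ (j + 1))⁻¹ with hy
  have hy1 : 1 ≤ y := by nlinarith
  have e1 := upper_bound h hx0 hx1 α hux hu1 n j
  rw [← hA] at e1
  have e1' : A * ((j : ℝ) + 1) ^ 2 ≤ A * (((j : ℝ) + 1) ^ 2 * y) := by
    gcongr; nlinarith [sq_nonneg ((j : ℝ) + 1)]
  have e2 : |(if j ≤ n then (α + 2 * ((n : ℝ) - j)) * ((u ^ (j + 1))⁻¹ * b (n - j)) else 0)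
      - (α + 2 * ((n : ℝ) - j)) * B| ≤ A * (((j : ℝ) + 1) * y) := by
    split_ifs with hjn
    · rw [← mul_sub]; exact lower_bound h hx0 hx1 α hux hu1 hjn
    · rw [zero_sub, abs_neg]; exact missing_bound hB hx0 hx1 α hu1 (not_le.1 hjn)
  have e2' : A * (((j : ℝ) + 1) * y) ≤ A * (((j : ℝ) + 1) ^ 2 * y) := by
    gcongr; nlinarith
  have e : bracket b α u n j - (4 * j + 2) * B =
      (α + 2 * ((j : ℝ) + (n + 1))) * (u ^ j * b (j + (n + 1)) - B) -
      ((if j ≤ n then (α + 2 * ((n : ℝ) - j)) * ((u ^ (j + 1))⁻¹ * b (n - j)) else 0)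
      - (α + 2 * ((n : ℝ) - j)) * B) := by
    rw [bracket]; ring
  rw [e]
  refine (abs_sub _ _).trans ?_
  calc _ ≤ A * (((j : ℝ) + 1) ^ 2 * y) + A * (((j : ℝ) + 1) ^ 2 * y) := by linarith
    _ = _ := by rw [hA]; ring

/-- Asymptotics of the derivative series at `w = u_n q^{-2(n+1)}` when `n (1 - u_n) → 0`. -/
lemma wser_tendsto {b : ℕ → ℝ} {B K q : ℝ} (hq0 : 0 < q) (hq1 : q < 1)
    (h : GeomConv b B K (q ^ 2)) (α : ℝ) {u : ℕ → ℝ}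
    (hu : ∀ n, q ^ 2 ≤ u n ∧ u n ≤ 1)
    (hlim : Tendsto (fun n : ℕ => ((n : ℝ) + 1) * (1 - u n)) atTop (nhds 0)) :
    Tendsto (fun n : ℕ => (-1) ^ (n + 1) * q ^ ((n + 1) * n) * ((u n) ^ (n + 1))⁻¹ *
        wser b q α 2 (u n * ((q ^ 2) ^ (n + 1))⁻¹)) atTop (nhds (2 * B * jacobiConst q)) := by
  have hx0 : 0 < q ^ 2 := by positivity
  have hx1 : q ^ 2 < 1 := by nlinarith
  set x := q ^ 2 with hx
  have hε : Tendsto (fun n : ℕ => ((n : ℝ) + 1) * (x ^ (n + 1) + (1 - u n))) atTop (nhds 0) := by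
    have h1 : Tendsto (fun n : ℕ => (n : ℝ) * x ^ n) atTop (nhds 0) :=
      tendsto_self_mul_const_pow_of_lt_one hx0.le hx1
    have h2 := (h1.comp (tendsto_add_atTop_nat 1)).add hlim
    rw [add_zero] at h2
    refine h2.congr fun n => ?_
    simp only [Function.comp]; push_cast; ring
  have hW : Summable fun j : ℕ => q ^ (j * (j + 1)) *
      (((j : ℝ) + 1) ^ 2 * ((x ^ (j + 1))⁻¹ * (x ^ (j + 1))⁻¹)) := by
    refine ((summable_quad hq0 hq1 (x⁻¹ * x⁻¹) (by positivity)).mul_left (x⁻¹ * x⁻¹)).congr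
      fun j => ?_
    rw [mul_pow, inv_pow, pow_succ x j]
    field_simp
  have hL : HasSum (fun j : ℕ => (-1 : ℝ) ^ j * q ^ (j * (j + 1)) * ((4 * j + 2) * B))
      (2 * B * jacobiConst q) := by
    have hs : Summable fun j : ℕ => (-1 : ℝ) ^ j * q ^ (j * (j + 1)) * (2 * j + 1) := by
      refine (summable_wterm (b := fun _ => 1) (K := 1) (by simp) hq0 hq1 1 2 1).congr fun j => ?_
      simp only [wterm]; ring
    convert! hs.hasSum.mul_left (2 * B) using 1
    funext j
    ring
  rw [tendsto_iff_norm_sub_tendsto_zero]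
  refine squeeze_zero (fun n => norm_nonneg _) (fun n => ?_)
    (g := fun n : ℕ => 2 * (2 + |α|) * K * (((n : ℝ) + 1) * (x ^ (n + 1) + (1 - u n))) *
      ∑' j : ℕ, q ^ (j * (j + 1)) * (((j : ℝ) + 1) ^ 2 * ((x ^ (j + 1))⁻¹ * (x ^ (j + 1))⁻¹))) ?_
  · have hd := (hasSum_bracket (fun k => (h k).2) hq0 hq1 α (hx0.trans_le (hu n).1) n).sub hL
    rw [← hx] at hd
    rw [← hd.tsum_eq]
    refine tsum_of_norm_bounded (hW.hasSum.mul_left _) fun j => ?_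
    rw [← mul_sub, norm_mul, norm_mul, norm_pow, norm_neg, norm_one, one_pow, one_mul,
      Real.norm_of_nonneg (by positivity), Real.norm_eq_abs]
    have := bracket_bound h hx0 hx1 α (hu n).1 (hu n).2 n j
    calc _ ≤ q ^ (j * (j + 1)) * _ := mul_le_mul_of_nonneg_left this (by positivity)
      _ = _ := by ring
  · have := (hε.const_mul (2 * (2 + |α|) * K)).mul_const
      (∑' j : ℕ, q ^ (j * (j + 1)) * (((j : ℝ) + 1) ^ 2 * ((x ^ (j + 1))⁻¹ * (x ^ (j + 1))⁻¹)))
    simpa using this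

/-! ### Positivity of the limiting constant -/

/-- The recurrence on `b` says that `b k` is a multiple of `1 / (q²;q²)_k`. Then
`g(w) = ∑ (-1)^k q^{k(k+1)} w^k b_k` satisfies `g(w) = (1 - q² w) g(q² w)` (the case `β = 0`), which
is the functional equation behind Euler's identity `g(w) = b_0 (q² w;q²)_∞`; the general case combines
it with its image under `w d/dw`. -/
lemma wser_recurrence {q : ℝ} (hq0 : 0 < q) (hq1 : q < 1) (α β w : ℝ) {b : ℕ → ℝ} {K : ℝ}
    (hK : ∀ k, |b k| ≤ K) (hb : ∀ k, b (k + 1) * (1 - (q ^ 2) ^ (k + 1)) = b k) :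
    wser b q α β w = (1 - q ^ 2 * w) * wser b q α β (q ^ 2 * w)
      - q ^ 2 * w * (β * wser b q 1 0 (q ^ 2 * w)) := by
  have s1 := (summable_wterm hK hq0 hq1 α β w).hasSum
  have s2 := (summable_wterm hK hq0 hq1 α β (q ^ 2 * w)).hasSum
  have s3 := (summable_wterm hK hq0 hq1 1 0 (q ^ 2 * w)).hasSum
  have d := s1.sub s2
  have e := (s2.add (s3.mul_left β)).mul_left (-(q ^ 2 * w))
  -- the difference series has vanishing zeroth term and is the second series shifted by one
  have d' := (hasSum_nat_add_iff' 1).2 d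
  have : (fun k => wterm b q α β w (k + 1) - wterm b q α β (q ^ 2 * w) (k + 1)) =
      fun k => -(q ^ 2 * w) * (wterm b q α β (q ^ 2 * w) k + β * wterm b q 1 0 (q ^ 2 * w) k) := by
    funext k
    have p : q ^ ((k + 1) * (k + 1 + 1)) = q ^ (k * (k + 1)) * ((q ^ 2) ^ k * q ^ 2) := by
      rw [← pow_mul, ← pow_add, ← pow_add]; congr 1; ring
    simp only [wterm, mul_pow (q ^ 2) w, p, ← hb k]
    push_cast
    ring
  rw [this] at d'
  have key := d'.unique e
  simp only [Finset.sum_range_one, wterm, wser] at key ⊢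
  simp at key ⊢
  linarith

lemma wser_continuous_zero {q : ℝ} (hq0 : 0 < q) (hq1 : q < 1) {b : ℕ → ℝ} {K : ℝ}
    (hK : ∀ k, |b k| ≤ K) :
    Tendsto (fun N : ℕ => wser b q 1 0 ((q ^ 2) ^ N)) atTop (nhds (b 0)) := by
  have hx0 : 0 < q ^ 2 := by positivity
  have hx1 : q ^ 2 < 1 := by nlinarith
  have h0 : wser b q 1 0 0 = b 0 := by
    rw [wser, tsum_eq_single 0]
    · simp [wterm]
    · intro k hk; simp [wterm, hk]
  rw [← h0]
  refine tendsto_tsum_of_dominated_convergence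
    (bound := fun k => |wterm (fun _ => K) q 1 0 1 k|)
    (summable_wterm (K := |K|) (fun _ => le_rfl) hq0 hq1 1 0 1).abs (fun k => ?_)
    (Eventually.of_forall fun N k => ?_)
  · have := ((tendsto_pow_atTop_nhds_zero_of_lt_one hx0.le hx1).pow k).const_mul
      ((-1) ^ k * (1 + 0 * k) * q ^ (k * (k + 1)))
    exact this.mul_const (b k)
  · have : ((q ^ 2) ^ N) ^ k ≤ 1 := pow_le_one₀ (by positivity) (pow_le_one₀ hx0.le hx1.le)
    have h2 : 0 ≤ ((q ^ 2) ^ N) ^ k := by positivity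
    simp only [wterm, Real.norm_eq_abs, abs_mul, one_pow, abs_one, abs_of_nonneg h2]
    refine mul_le_mul ?_ ((hK k).trans (le_abs_self K)) (abs_nonneg _) (by positivity)
    exact mul_le_mul_of_nonneg_left this (by positivity)

/-- For `b k = 1 / (q²;q²)_k` the normalized derivative series at `w = q^{-2(n+1)}` has the exact value
`2 g(1) (q²;q²)_n` with `g(1) > 0`, while by `wser_tendsto` its limit is a positive multiple of
`jacobiConst q`. -/
lemma jacobiConst_pos {q : ℝ} (hq0 : 0 < q) (hq1 : q < 1) : 0 < jacobiConst q := by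
  have hx0 : 0 < q ^ 2 := by positivity
  have hx1 : q ^ 2 < 1 := by nlinarith
  obtain ⟨K, hG⟩ := geomConv_qPoch_inv hx0 hx1 hx0 hx1
  have hPpos := qPoch_pos hx0 hx1 hx0 hx1
  have hinf := qPochInf_pos hx0 hx1 hx0 hx1
  set x := q ^ 2 with hx
  set b : ℕ → ℝ := fun k => (qPoch x x k)⁻¹ with hbdef
  have hK : ∀ k, |b k| ≤ K := fun k => (hG k).2
  have hb : ∀ k, b (k + 1) * (1 - x ^ (k + 1)) = b k := fun k => by
    have h1 := hPpos k
    have h2 := hPpos (k + 1)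
    simp only [hbdef]
    rw [qPoch_succ] at h2 ⊢
    have h3 : 1 - x * x ^ k ≠ 0 := (pos_of_mul_pos_right h2 h1.le).ne'
    rw [pow_succ', mul_inv, mul_assoc, inv_mul_cancel₀ h3, mul_one]
  have hrec := fun α β w => wser_recurrence hq0 hq1 α β w hK hb
  rw [← hx] at hrec
  -- With `g w = wser b q 1 0 w`, iterating the functional equation from `w = 1` reaches `x^N → 0`.
  have hg1 : ∀ N, wser b q 1 0 1 = qPoch x x N * wser b q 1 0 (x ^ N) := fun N => by
    induction N with
    | zero => simp [qPoch]
    | succ N ih =>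
      rw [ih, hrec 1 0 (x ^ N), qPoch_succ, pow_succ' x N]; ring
  have hgpos : 0 < wser b q 1 0 1 := by
    have hc := wser_continuous_zero hq0 hq1 hK
    have hb0 : (0 : ℝ) < b 0 := inv_pos.2 (hPpos 0)
    obtain ⟨N, hN⟩ := (hc.eventually (lt_mem_nhds hb0)).exists
    rw [hg1 N]
    exact mul_pos (hPpos N) hN
  have hstep : ∀ n : ℕ, x * (x ^ (n + 1))⁻¹ = (x ^ n)⁻¹ := fun n => by
    rw [pow_succ']; field_simp
  -- `g` vanishes at every `x^{-(n+1)}`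
  have hg0 : ∀ n : ℕ, wser b q 1 0 ((x ^ (n + 1))⁻¹) = 0 := fun n => by
    induction n with
    | zero => rw [hrec, hstep]; simp
    | succ n ih => rw [hrec, hstep, ih]; simp
  -- exact value of the normalized derivative at `x^{-(n+1)}`
  have hE : ∀ n : ℕ, (-1 : ℝ) ^ (n + 1) * q ^ ((n + 1) * n) * wser b q 0 2 ((x ^ (n + 1))⁻¹) =
      2 * wser b q 1 0 1 * qPoch x x n := fun n => by
    induction n with
    | zero => rw [hrec, hstep]; simp [qPoch]
    | succ n ih =>
      rw [hrec, hstep, hg0 n, qPoch_succ, ← mul_assoc (2 * wser b q 1 0 1), ← ih]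
      have p : q ^ ((n + 1 + 1) * (n + 1)) = q ^ ((n + 1) * n) * x ^ (n + 1) := by
        rw [hx, ← pow_mul, ← pow_add]; congr 1; ring
      have hne : x ^ (n + 1) ≠ 0 := by positivity
      rw [p, ← pow_succ' x n, pow_succ (-1 : ℝ) (n + 1)]
      generalize x ^ (n + 1) = d at *
      field_simp
      ring
  have hT := wser_tendsto hq0 hq1 hG 0 (u := fun _ => 1) (fun n => ⟨hx1.le, le_rfl⟩) (by simp)
  have hT' : Tendsto (fun n : ℕ => 2 * wser b q 1 0 1 * qPoch x x n) atTop
      (nhds (2 * (qPochInf x x)⁻¹ * jacobiConst q)) := by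
    refine hT.congr fun n => ?_
    rw [← hE n]; simp [hx]
  have hval := tendsto_nhds_unique hT' ((qPoch_tendsto hx0 hx1).const_mul _)
  have hpos : 0 < 2 * (qPochInf x x)⁻¹ * jacobiConst q := by rw [hval]; positivity
  exact pos_of_mul_pos_right hpos (by positivity)

/-! ### The derivative of the q-Bessel function -/

lemma hasDerivAt_series {b : ℕ → ℝ} {K : ℝ} (hK : ∀ k, |b k| ≤ K) {q : ℝ} (hq0 : 0 < q)
    (hq1 : q < 1) {z : ℝ} (hz : 0 < z) :
    HasDerivAt (fun z => wser b q 1 0 (z ^ 2)) (z⁻¹ * wser b q 0 2 (z ^ 2)) z := by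
  have hK0 : 0 ≤ K := (abs_nonneg _).trans (hK 0)
  have hd := hasDerivAt_tsum_of_isPreconnected (𝕜 := ℝ) (t := Set.Ioo 0 (z + 1)) (y := z) (y₀ := z)
    (g := fun (k : ℕ) y => wterm b q 1 0 (y ^ 2) k)
    (g' := fun (k : ℕ) y => (-1) ^ k * q ^ (k * (k + 1)) * b k * (((2 * k : ℕ) : ℝ) * y ^ (2 * k - 1)))
    (u := fun k : ℕ => 2 * K * (((k : ℝ) + 1) ^ 2 * q ^ (k * (k + 1)) * ((z + 1) ^ 2) ^ k))
    ((summable_quad hq0 hq1 ((z + 1) ^ 2) (by positivity)).mul_left _)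
    isOpen_Ioo isPreconnected_Ioo ?_ ?_ ⟨hz, by linarith⟩
    (summable_wterm hK hq0 hq1 1 0 (z ^ 2)) ⟨hz, by linarith⟩
  · convert! hd using 1
    rw [wser, ← tsum_mul_left]
    refine tsum_congr fun k => ?_
    rw [wterm, ← pow_mul]
    rcases k with _ | k
    · simp
    · rw [show 2 * (k + 1) - 1 = 2 * k + 1 by omega, show 2 * (k + 1) = (2 * k + 1) + 1 by ring,
        pow_succ z (2 * k + 1)]
      push_cast
      field_simp
      ring
  · intro k y hy
    have := (hasDerivAt_pow (2 * k) y).const_mul ((-1) ^ k * q ^ (k * (k + 1)) * b k)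
    refine this.congr_of_eventuallyEq (Eventually.of_forall fun y => ?_)
    simp only [wterm, ← pow_mul]; ring
  · intro k y hy
    have hy0 : 0 < y := hy.1
    have h1 : y ^ (2 * k - 1) ≤ ((z + 1) ^ 2) ^ k := by
      rw [← pow_mul]
      calc y ^ (2 * k - 1) ≤ (z + 1) ^ (2 * k - 1) := by gcongr; exact hy.2.le
        _ ≤ _ := pow_le_pow_right₀ (by linarith) (by omega)
    rw [Real.norm_eq_abs, abs_mul, abs_mul, abs_mul, abs_mul, abs_pow, abs_neg, abs_one, one_pow,
      one_mul, Nat.abs_cast, abs_of_pos (by positivity : 0 < q ^ (k * (k + 1))),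
      abs_of_pos (by positivity : 0 < y ^ (2 * k - 1))]
    have h2 : ((2 * k : ℕ) : ℝ) ≤ 2 * ((k : ℝ) + 1) ^ 2 := by
      push_cast; nlinarith [(k.cast_nonneg : (0 : ℝ) ≤ k)]
    calc _ ≤ q ^ (k * (k + 1)) * K * ((2 * ((k : ℝ) + 1) ^ 2) * ((z + 1) ^ 2) ^ k) := by
          gcongr
          exact hK k
      _ = _ := by ring

/-- `z J_ν'(z)` has the series of `J_ν` with the `k`-th term multiplied by `ν + 2k`. -/
lemma deriv_qBessel {q ν : ℝ} (hq0 : 0 < q) (hq1 : q < 1) {b : ℕ → ℝ} {K : ℝ}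
    (hK : ∀ k, |b k| ≤ K)
    (hb : ∀ k, b k = (qPoch (q ^ (2 * (ν + 1))) (q ^ 2) k)⁻¹ * (qPoch (q ^ 2) (q ^ 2) k)⁻¹)
    {z : ℝ} (hz : 0 < z) :
    deriv (qBessel ν q) z =
      z ^ (ν - 1) * (qPochInf (q ^ (2 * (ν + 1))) (q ^ 2) / qPochInf (q ^ 2) (q ^ 2)) *
        wser b q ν 2 (z ^ 2) := by
  set C := qPochInf (q ^ (2 * (ν + 1))) (q ^ 2) / qPochInf (q ^ 2) (q ^ 2) with hC
  have hfun : qBessel ν q = fun z => z ^ ν * C * wser b q 1 0 (z ^ 2) := by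
    funext z
    rw [qBessel, ← hC, wser]
    congr 1
    refine tsum_congr fun k => ?_
    rw [wterm, hb k, ← pow_mul, div_eq_mul_inv, mul_inv]
    ring
  have h1 : HasDerivAt (fun z : ℝ => z ^ ν * C) (ν * z ^ (ν - 1) * C) z :=
    (Real.hasDerivAt_rpow_const (Or.inl hz.ne')).mul_const C
  have h2 := h1.mul (hasDerivAt_series hK hq0 hq1 hz)
  have hsplit : wser b q ν 2 (z ^ 2) = ν * wser b q 1 0 (z ^ 2) + wser b q 0 2 (z ^ 2) := by
    have s1 := (summable_wterm hK hq0 hq1 1 0 (z ^ 2)).hasSum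
    have s2 := (summable_wterm hK hq0 hq1 0 2 (z ^ 2)).hasSum
    rw [wser, wser, wser, ← ((s1.mul_left ν).add s2).tsum_eq]
    refine tsum_congr fun k => ?_
    simp only [wterm]; ring
  have hpow : z ^ ν * z⁻¹ = z ^ (ν - 1) := by
    rw [Real.rpow_sub_one hz.ne', div_eq_mul_inv]
  rw [hfun, hsplit]
  refine h2.deriv.trans ?_
  rw [← hpow]
  ring

theorem stmt0 (q ν : ℝ) (hq0 : 0 < q) (hq1 : q < 1) (hν : -1 < ν)
    (θ : ℕ → ℝ) (hθ : ∀ m, 1 ≤ m → 0 ≤ θ m ∧ θ m < 1)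
    (hlim : Tendsto (fun m : ℕ => (m : ℝ) * θ m) atTop (nhds 0)) :
    ∃ M : ℕ, ∀ m, M ≤ m →
      0 < (-1 : ℝ) ^ m * deriv (qBessel ν q) (q ^ (-(m : ℝ) + θ m)) := by
  have hx0 : 0 < q ^ 2 := by positivity
  have hx1 : q ^ 2 < 1 := by nlinarith
  have ha0 : 0 < q ^ (2 * (ν + 1)) := Real.rpow_pos_of_pos hq0 _
  have ha1 : q ^ (2 * (ν + 1)) < 1 := Real.rpow_lt_one hq0.le hq1 (by linarith)
  obtain ⟨K₁, hG₁⟩ := geomConv_qPoch_inv ha0 ha1 hx0 hx1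
  obtain ⟨K₂, hG₂⟩ := geomConv_qPoch_inv hx0 hx1 hx0 hx1
  have hG := hG₁.mul hG₂ hx0 hx1
  have hP₁ := qPochInf_pos ha0 ha1 hx0 hx1
  have hP₂ := qPochInf_pos hx0 hx1 hx0 hx1
  set b : ℕ → ℝ :=
    fun k => (qPoch (q ^ (2 * (ν + 1))) (q ^ 2) k)⁻¹ * (qPoch (q ^ 2) (q ^ 2) k)⁻¹ with hb
  -- `z ^ 2 = u_n * q ^ (-2 (n + 1))` with `u_n = q ^ (2 θ_{n+1})`, where `m = n + 1`
  set u : ℕ → ℝ := fun n => q ^ (2 * θ (n + 1)) with hu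
  have hu0 : ∀ n, 0 < u n := fun n => Real.rpow_pos_of_pos hq0 _
  have hubd : ∀ n, q ^ 2 ≤ u n ∧ u n ≤ 1 := fun n => by
    obtain ⟨h1, h2⟩ := hθ (n + 1) (by omega)
    refine ⟨?_, Real.rpow_le_one hq0.le hq1.le (by linarith)⟩
    rw [← Real.rpow_natCast]
    exact Real.rpow_le_rpow_of_exponent_ge hq0 hq1.le (by push_cast; linarith)
  have hulim : Tendsto (fun n : ℕ => ((n : ℝ) + 1) * (1 - u n)) atTop (nhds 0) := by
    have h1 := ((hlim.comp (tendsto_add_atTop_nat 1)).const_mul (-(2 * Real.log q)))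
    rw [mul_zero] at h1
    refine squeeze_zero (fun n => ?_) (fun n => ?_) h1
    · have := (hubd n).2
      exact mul_nonneg (by positivity) (by linarith)
    · -- `1 - exp t ≤ -t`
      have h2 := Real.add_one_le_exp (Real.log q * (2 * θ (n + 1)))
      rw [← Real.rpow_def_of_pos hq0] at h2
      have h3 : 1 - u n ≤ -(Real.log q * (2 * θ (n + 1))) := by simp only [hu]; linarith
      calc ((n : ℝ) + 1) * (1 - u n) ≤ ((n : ℝ) + 1) * -(Real.log q * (2 * θ (n + 1))) := by gcongr
        _ = _ := by simp only [Function.comp]; push_cast; ring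
  have hT := wser_tendsto hq0 hq1 hG ν hubd hulim
  have hL : 0 < 2 * ((qPochInf (q ^ (2 * (ν + 1))) (q ^ 2))⁻¹ * (qPochInf (q ^ 2) (q ^ 2))⁻¹) *
      jacobiConst q := by
    have := jacobiConst_pos hq0 hq1
    positivity
  obtain ⟨N, hN⟩ := eventually_atTop.1 (hT.eventually (lt_mem_nhds hL))
  refine ⟨N + 1, fun m hm => ?_⟩
  obtain ⟨n, rfl⟩ : ∃ n, m = n + 1 := ⟨m - 1, by omega⟩
  have hn := hN n (by omega)
  have hz : 0 < q ^ (-((n + 1 : ℕ) : ℝ) + θ (n + 1)) := Real.rpow_pos_of_pos hq0 _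
  have hz2 : (q ^ (-((n + 1 : ℕ) : ℝ) + θ (n + 1))) ^ 2 = u n * ((q ^ 2) ^ (n + 1))⁻¹ := by
    rw [← pow_mul, ← Real.rpow_natCast q (2 * (n + 1)), ← Real.rpow_neg hq0.le,
      ← Real.rpow_add hq0, ← Real.rpow_natCast, ← Real.rpow_mul hq0.le]
    congr 1
    push_cast
    ring
  rw [deriv_qBessel hq0 hq1 (fun k => (hG k).2) (fun k => rfl) hz, hz2]
  -- both sides differ by the positive factor `q^{n(n+1)} u^{-(n+1)}` of the normalization
  have hfac : 0 < q ^ ((n + 1) * n) * ((u n) ^ (n + 1))⁻¹ := by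
    have := hu0 n
    positivity
  have hs : 0 < (-1) ^ (n + 1) * wser b q ν 2 (u n * ((q ^ 2) ^ (n + 1))⁻¹) := by
    refine pos_of_mul_pos_right (a := q ^ ((n + 1) * n) * ((u n) ^ (n + 1))⁻¹) ?_ hfac.le
    calc (0 : ℝ) < _ := hn
      _ = _ := by ring
  have hpre : 0 < (q ^ (-((n + 1 : ℕ) : ℝ) + θ (n + 1))) ^ (ν - 1) *
      (qPochInf (q ^ (2 * (ν + 1))) (q ^ 2) / qPochInf (q ^ 2) (q ^ 2)) :=
    mul_pos (Real.rpow_pos_of_pos hz _) (div_pos hP₁ hP₂)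
  calc (0 : ℝ) < _ := mul_pos hpre hs
    _ = _ := by ring
end

section
/- Let {θ_m}_{m≥1} be a sequence of real numbers with 0 ≤ θ_m < 1 for all m and lim_{m→∞} m·θ_m = +∞. Then there exists M ∈ ℕ such that for all integers m ≥ M, the sign of J_ν′(z;q²) evaluated at z = q^{−m+θ_m} equals (−1)^{m−1}, i.e., (−1)^{m−1} · J_ν′(q^{−m+θ_m};q²) > 0. -/
/-!
Write `J_ν(z;q²) = C z^ν F(z²)` with `C > 0` and `F(y) = ∑_k (-1)^k q^{k(k+1)} c_k y^k`, where
`c_k = 1 / ((b;q²)_k (q²;q²)_k)` and `b = q^{2(ν+1)}`. Then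
`J_ν′(z) = C z^{ν-1} ∑_k (ν + 2k) (-1)^k q^{k(k+1)} c_k z^{2k}` (`qBessel_deriv`).

At `z² = q^{-2m} t` with `t = q^{2θ_m} ∈ (q²,1]` the dominant index is near `k = m`. Putting `k = m + j`
(`shift`) turns the sum into
`(-1)^m q^{m-m²} t^m ∑_{j ≥ -m} (ν + 2m + 2j) c_{m+j} (-1)^j q^{j(j+1)} t^j`.
Since `c_k` converges to `c_∞` with error `O(q^{2k})`, this last sum equals
`c_∞ ((ν + 2m) T(t) + 2 U(t)) + O(m q^{2m})` uniformly in `t` (`approx`), where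
`T(t) = ∑_{j ∈ ℤ} (-1)^j q^{j(j+1)} t^j` and `U = t T′`.

It remains to see that `(ν + 2m) T + 2U` stays below a negative constant (`main_term`). The same
recentring, applied to Euler's series (`b = 0`), whose sum is the product `(q²y;q²)_∞`, yields the
triple product for `T`, hence `T(t) ≤ -c (1-t)(t-q²)` on `[q²,1]` and `T(q²) = 0` (`theta_neg`).
Therefore `U(q²) < 0` (`thetaU_neg`), which settles `t` near `q²`; away from `q²` one has
`-m T(t) ≥ const · m θ_m → ∞` while `U` is bounded.
-/

open Filter
open Topology

/-! ### q-shifted factorials and the coefficients -/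

/-- For `0 ≤ a < 1` the products `(a;q²)_n` decrease to the positive limit `(a;q²)_∞`. -/
theorem qPoch_facts {q a : ℝ} (hq0 : 0 < q) (hq1 : q < 1) (ha0 : 0 ≤ a) (ha1 : a < 1) :
    0 < qPochInf a (q ^ 2) ∧ (∀ n, qPochInf a (q ^ 2) ≤ qPoch a (q ^ 2) n) ∧
      (∀ n, qPoch a (q ^ 2) n ≤ 1) ∧
      Tendsto (qPoch a (q ^ 2)) atTop (𝓝 (qPochInf a (q ^ 2))) := by
  have hp0 : 0 < q ^ 2 := by positivity
  have hp1 : q ^ 2 < 1 := pow_lt_one₀ hq0.le hq1 two_ne_zero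
  have hs : Summable fun j : ℕ => -(a * (q ^ 2) ^ j) :=
    ((summable_geometric_of_lt_one hp0.le hp1).mul_left a).neg
  have hle : ∀ j : ℕ, (q ^ 2) ^ j ≤ 1 := fun j => pow_le_one₀ hp0.le hp1.le
  have hf : ∀ j : ℕ, 0 < 1 + -(a * (q ^ 2) ^ j) := fun j => by
    have := mul_le_mul_of_nonneg_left (hle j) ha0
    linarith
  have hf1 : ∀ j : ℕ, 1 - a * (q ^ 2) ^ j ≤ 1 := fun j => by
    have : 0 ≤ a * (q ^ 2) ^ j := by positivity
    linarith
  have ht : Tendsto (qPoch a (q ^ 2)) atTop (𝓝 (qPochInf a (q ^ 2))) := by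
    have := (Real.multipliable_one_add_of_summable hs).hasProd.tendsto_prod_nat
    simp only [← sub_eq_add_neg] at this
    exact this
  have hpos : ∀ n, 0 ≤ qPoch a (q ^ 2) n := fun n =>
    Finset.prod_nonneg fun j _ => by have := hf j; linarith
  have hanti : Antitone (qPoch a (q ^ 2)) := antitone_nat_of_succ_le fun n => by
    have h : qPoch a (q ^ 2) (n + 1) = qPoch a (q ^ 2) n * (1 - a * (q ^ 2) ^ n) :=
      Finset.prod_range_succ _ _
    rw [h]
    exact mul_le_of_le_one_right (hpos n) (hf1 n)
  refine ⟨?_, hanti.le_of_tendsto ht, fun n => ?_, ht⟩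
  · have := Real.rexp_tsum_eq_tprod hf (Real.summable_log_one_add_of_summable hs)
    have h2 : qPochInf a (q ^ 2) = ∏' j : ℕ, (1 + -(a * (q ^ 2) ^ j)) := by
      simp only [qPochInf, ← sub_eq_add_neg]
    rw [h2, ← this]
    exact Real.exp_pos _
  · simpa [qPoch] using hanti (Nat.zero_le n)

/-- The modulus `1 / ((b;q²)_k (q²;q²)_k)` of the series coefficients, without its Gaussian factor. -/
noncomputable def cf (b q : ℝ) (k : ℕ) : ℝ := 1 / (qPoch b (q ^ 2) k * qPoch (q ^ 2) (q ^ 2) k)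

/-- The limit of `cf b q k` as `k → ∞`. -/
noncomputable def cfInf (b q : ℝ) : ℝ := 1 / (qPochInf b (q ^ 2) * qPochInf (q ^ 2) (q ^ 2))

/-- `cf`, extended by `0` to negative indices. -/
noncomputable def cz (b q : ℝ) (k : ℤ) : ℝ := if 0 ≤ k then cf b q k.toNat else 0

/-- `cf b q k` increases to `cfInf b q` at a geometric rate, since consecutive terms differ by
`O(q^{2k})`. -/
theorem cf_facts {q b : ℝ} (hq0 : 0 < q) (hq1 : q < 1) (hb0 : 0 ≤ b) (hb1 : b < 1) :
    0 < cfInf b q ∧ ∀ k, 0 < cf b q k ∧ cf b q k ≤ cfInf b q ∧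
      cfInf b q - cf b q k ≤ 2 * cfInf b q / (1 - q ^ 2) * (q ^ 2) ^ k := by
  have hp0 : 0 < q ^ 2 := by positivity
  have hp1 : q ^ 2 < 1 := pow_lt_one₀ hq0.le hq1 two_ne_zero
  obtain ⟨hB, hBle, hB1, hBt⟩ := qPoch_facts hq0 hq1 hb0 hb1
  obtain ⟨hP, hPle, hP1, hPt⟩ := qPoch_facts hq0 hq1 hp0.le hp1
  have hI : 0 < cfInf b q := by unfold cfInf; positivity
  have hBk : ∀ k, 0 < qPoch b (q ^ 2) k := fun k => hB.trans_le (hBle k)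
  have hPk : ∀ k, 0 < qPoch (q ^ 2) (q ^ 2) k := fun k => hP.trans_le (hPle k)
  have hpos : ∀ k, 0 < cf b q k := fun k => by
    unfold cf; have := hBk k; have := hPk k; positivity
  have hle : ∀ k, cf b q k ≤ cfInf b q := fun k => by
    unfold cf cfInf
    exact one_div_le_one_div_of_le (by positivity)
      (mul_le_mul (hBle k) (hPle k) hP.le (hBk k).le)
  have ht : Tendsto (cf b q) atTop (𝓝 (cfInf b q)) := by
    unfold cf cfInf
    exact tendsto_const_nhds.div (hBt.mul hPt) (by positivity)
  refine ⟨hI, fun k => ⟨hpos k, hle k, ?_⟩⟩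
  set K := 2 * cfInf b q / (1 - q ^ 2) with hK
  have hKe : K * (1 - q ^ 2) = 2 * cfInf b q := by
    rw [hK]; field_simp [(sub_pos.2 hp1).ne']
  -- `cf b q k + K q^{2k}` decreases to `cfInf b q`, so it stays above its limit.
  have hanti : Antitone fun k => cf b q k + K * (q ^ 2) ^ k := antitone_nat_of_succ_le fun n => by
    have hB' : qPoch b (q ^ 2) (n + 1) = qPoch b (q ^ 2) n * (1 - b * (q ^ 2) ^ n) :=
      Finset.prod_range_succ _ _
    have hP' : qPoch (q ^ 2) (q ^ 2) (n + 1) = qPoch (q ^ 2) (q ^ 2) n * (1 - q ^ 2 * (q ^ 2) ^ n) :=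
      Finset.prod_range_succ _ _
    have hrec : cf b q n = cf b q (n + 1) * ((1 - b * (q ^ 2) ^ n) * (1 - q ^ 2 * (q ^ 2) ^ n)) := by
      have h1 := hBk (n + 1)
      have h2 := hPk (n + 1)
      unfold cf
      rw [hB'] at h1 ⊢
      rw [hP'] at h2 ⊢
      have h3 := (pos_iff_pos_of_mul_pos h1).1 (hBk n)
      have h4 := (pos_iff_pos_of_mul_pos h2).1 (hPk n)
      have := hBk n
      have := hPk n
      field_simp
    have hy : 0 < (q ^ 2) ^ n := by positivity
    have hx := hle (n + 1)
    have hx0 := hpos (n + 1)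
    have e : cf b q (n + 1) - cf b q n ≤ 2 * cfInf b q * (q ^ 2) ^ n := by
      rw [hrec]
      generalize cf b q (n + 1) = x at hx hx0
      generalize (q ^ 2) ^ n = y at hy
      generalize q ^ 2 = p at *
      have h1 : x - x * ((1 - b * y) * (1 - p * y)) ≤ x * (2 * y) := by
        have : 0 ≤ x * (b * y * (p * y)) := by positivity
        have h2 : x * y * (b + p) ≤ x * y * 2 :=
          mul_le_mul_of_nonneg_left (by linarith) (by positivity)
        nlinarith
      nlinarith [mul_le_mul_of_nonneg_right hx hy.le]
    simp only [pow_succ (q ^ 2) n]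
    have : K * (q ^ 2) ^ n - K * ((q ^ 2) ^ n * q ^ 2) = 2 * cfInf b q * (q ^ 2) ^ n := by
      rw [← hKe]; ring
    linarith
  have hlim : Tendsto (fun k => cf b q k + K * (q ^ 2) ^ k) atTop (𝓝 (cfInf b q)) := by
    simpa using ht.add ((tendsto_pow_atTop_nhds_zero_of_lt_one hp0.le hp1).const_mul K)
  have : cfInf b q ≤ cf b q k + K * (q ^ 2) ^ k := hanti.le_of_tendsto hlim k
  linarith

/-- The geometric rate holds on all of `ℤ`: at negative `k` the factor `q^{2k}` exceeds `1`. -/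
theorem cz_facts {q b : ℝ} (hq0 : 0 < q) (hq1 : q < 1) (hb0 : 0 ≤ b) (hb1 : b < 1) (k : ℤ) :
    |cz b q k - cfInf b q| ≤ 2 * cfInf b q / (1 - q ^ 2) * (q ^ 2) ^ k := by
  have hp0 : 0 < q ^ 2 := by positivity
  have hp1 : q ^ 2 < 1 := pow_lt_one₀ hq0.le hq1 two_ne_zero
  obtain ⟨hI, h⟩ := cf_facts hq0 hq1 hb0 hb1
  unfold cz
  split_ifs with hk
  · lift k to ℕ using hk
    obtain ⟨h1, h2, h3⟩ := h k
    rw [abs_sub_comm, Int.toNat_natCast, abs_of_nonneg (by linarith), zpow_natCast]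
    exact h3
  · have h1 : 1 ≤ (q ^ 2) ^ k := one_le_zpow_of_nonpos₀ hp0 hp1.le (by omega)
    have h2 : cfInf b q ≤ 2 * cfInf b q / (1 - q ^ 2) := by
      rw [le_div_iff₀ (by linarith)]
      nlinarith
    rw [zero_sub, abs_neg, abs_of_pos hI]
    exact h2.trans (le_mul_of_one_le_right (by linarith) h1)

/-! ### Theta series and recentring -/

/-- The `j`-th term `(-1)^j q^{j(j+1)} t^j` of the theta series. -/
noncomputable def th (q t : ℝ) (j : ℤ) : ℝ := (-1) ^ j * q ^ (j * (j + 1)) * t ^ j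

/-- The theta series `∑_{j ∈ ℤ} (-1)^j q^{j(j+1)} t^j`. -/
noncomputable def thetaT (q t : ℝ) : ℝ := ∑' j : ℤ, th q t j

/-- The image of `thetaT` under the Euler operator `t d/dt`. -/
noncomputable def thetaU (q t : ℝ) : ℝ := ∑' j : ℤ, (j : ℝ) * th q t j

/-- A summable majorant for all the two-sided series involved, uniform in `q³ ≤ t ≤ q⁻³`. -/
noncomputable def maj (q : ℝ) (j : ℤ) : ℝ := (1 + |(j : ℝ)|) * ((q ^ 16)⁻¹ * q ^ j.natAbs)

theorem maj_summable {q : ℝ} (hq0 : 0 < q) (hq1 : q < 1) : Summable (maj q) := by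
  have h : Summable fun n : ℕ => (1 + (n : ℝ)) * ((q ^ 16)⁻¹ * q ^ n) := by
    have h0 := summable_geometric_of_lt_one hq0.le hq1
    have h1 := summable_pow_mul_geometric_of_norm_lt_one (R := ℝ) 1
      (r := q) (by rwa [Real.norm_of_nonneg hq0.le])
    refine ((h0.add h1).mul_left (q ^ 16)⁻¹).congr fun n => ?_
    ring
  refine Summable.of_nat_of_neg ?_ ?_
  · refine h.congr fun n => ?_
    simp [maj]
  · refine h.congr fun n => ?_
    simp [maj]

theorem th_abs {q t : ℝ} (hq0 : 0 < q) (ht : 0 < t) (j : ℤ) :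
    |th q t j| = q ^ (j * (j + 1)) * t ^ j := by
  unfold th
  rw [abs_mul, abs_mul, abs_zpow, abs_neg, abs_one, one_zpow, one_mul,
    abs_of_pos (by positivity), abs_of_pos (by positivity)]

/-- The Gaussian factor `q^{j²}` absorbs `t^j` and `q^{2j}`, because `j² - 8|j| + 16 ≥ 0`. -/
theorem th_bound {q t : ℝ} (hq0 : 0 < q) (hq1 : q < 1) (h1 : q ^ 3 ≤ t) (h2 : t ≤ (q ^ 3)⁻¹) (j : ℤ) :
    |th q t j| ≤ (q ^ 16)⁻¹ * q ^ j.natAbs ∧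
    |th q t j| * (q ^ 2) ^ j ≤ (q ^ 16)⁻¹ * q ^ j.natAbs := by
  have ht : 0 < t := lt_of_lt_of_le (by positivity) h1
  have key : t ^ j ≤ q ^ (-3 * |j|) := by
    rcases le_total 0 j with hj | hj
    · rw [abs_of_nonneg hj]
      have : t ^ j ≤ ((q ^ 3)⁻¹) ^ j := zpow_le_zpow_left₀ hj ht.le h2
      rw [zpow_mul]
      convert this using 2
      rw [zpow_neg]; norm_cast
    · rw [abs_of_nonpos hj]
      have : (t⁻¹) ^ (-j) ≤ ((q ^ 3)⁻¹) ^ (-j) :=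
        zpow_le_zpow_left₀ (by omega) (by positivity) (inv_anti₀ (by positivity) h1)
      rw [inv_zpow', neg_neg] at this
      rw [zpow_mul]
      convert this using 2
      rw [zpow_neg]; norm_cast
  have e : (q ^ 16)⁻¹ * q ^ j.natAbs = q ^ (|j| - 16) := by
    rw [zpow_sub₀ hq0.ne', Int.abs_eq_natAbs, zpow_natCast, div_eq_mul_inv, mul_comm]
    norm_cast
  have e2 : (q ^ 2) ^ j = q ^ (2 * j) := by rw [zpow_mul]; norm_cast
  rw [th_abs hq0 ht, e, e2]
  have sq : |j| * |j| = j * j := abs_mul_abs_self j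
  have m1 := neg_abs_le j
  have b1 : q ^ (j * (j + 1)) * t ^ j ≤ q ^ (j * (j + 1) + -3 * |j|) := by
    rw [zpow_add₀ hq0.ne']
    exact mul_le_mul_of_nonneg_left key (by positivity)
  constructor
  · refine b1.trans (zpow_le_zpow_right_of_le_one₀ hq0 hq1.le ?_)
    nlinarith [sq_nonneg (|j| - 4), abs_nonneg j]
  · refine (mul_le_mul_of_nonneg_right b1 (by positivity)).trans ?_
    rw [← zpow_add₀ hq0.ne']
    refine (zpow_le_zpow_right_of_le_one₀ hq0 hq1.le ?_)
    nlinarith [sq_nonneg (|j| - 4), abs_nonneg j]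

theorem th_maj {q t : ℝ} (hq0 : 0 < q) (hq1 : q < 1) (h1 : q ^ 3 ≤ t) (h2 : t ≤ (q ^ 3)⁻¹) (j : ℤ) :
    ‖th q t j‖ ≤ maj q j ∧ ‖(j : ℝ) * th q t j‖ ≤ maj q j := by
  have h := (th_bound hq0 hq1 h1 h2 j).1
  have hj := abs_nonneg (j : ℝ)
  have h0 := abs_nonneg (th q t j)
  rw [norm_mul, Real.norm_eq_abs, Real.norm_eq_abs]
  unfold maj
  constructor <;> nlinarith

/-- Replacing the coefficients `cz (m + j)` by their limit costs `O(m q^{2m})`, uniformly in `t`. -/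
theorem approx {q b : ℝ} (hq0 : 0 < q) (hq1 : q < 1) (hb0 : 0 ≤ b) (hb1 : b < 1) {t : ℝ}
    (h1 : q ^ 3 ≤ t) (h2 : t ≤ (q ^ 3)⁻¹) (α β : ℝ) (m : ℕ) :
    |∑' j : ℤ, (α + β * (m + j)) * cz b q (m + j) * th q t j -
      cfInf b q * ((α + β * m) * thetaT q t + β * thetaU q t)| ≤
      (|α + β * m| + |β|) * (2 * cfInf b q / (1 - q ^ 2)) * (∑' j, maj q j) * (q ^ 2) ^ m := by
  have hM := maj_summable hq0 hq1
  have sT : Summable (th q t) := hM.of_norm_bounded fun j => (th_maj hq0 hq1 h1 h2 j).1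
  have sU : Summable fun j : ℤ => (j : ℝ) * th q t j :=
    hM.of_norm_bounded fun j => (th_maj hq0 hq1 h1 h2 j).2
  have hp1 : q ^ 2 < 1 := pow_lt_one₀ hq0.le hq1 two_ne_zero
  set K := 2 * cfInf b q / (1 - q ^ 2) with hK
  have hK0 : 0 < K := div_pos (mul_pos two_pos (cf_facts hq0 hq1 hb0 hb1).1) (by linarith)
  set C := (|α + β * m| + |β|) * K * (q ^ 2) ^ m with hC
  set d : ℤ → ℝ := fun j => (α + β * (m + j)) * (cz b q (m + j) - cfInf b q) * th q t j with hd
  have hdb : ∀ j, ‖d j‖ ≤ C * maj q j := fun j => by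
    have hc := cz_facts hq0 hq1 hb0 hb1 (m + j)
    have hw := (th_bound hq0 hq1 h1 h2 j).2
    have hl : |α + β * (m + j)| ≤ (|α + β * m| + |β|) * (1 + |(j : ℝ)|) := by
      have : α + β * (m + j) = (α + β * m) + β * j := by ring
      rw [this]
      refine (abs_add_le _ _).trans ?_
      rw [abs_mul]
      nlinarith [abs_nonneg (α + β * m), abs_nonneg β, abs_nonneg (j : ℝ),
        mul_nonneg (abs_nonneg (α + β * m)) (abs_nonneg (j : ℝ))]
    rw [zpow_add₀ (by positivity), zpow_natCast] at hc
    rw [hd, norm_mul, norm_mul, Real.norm_eq_abs, Real.norm_eq_abs, Real.norm_eq_abs]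
    calc _ ≤ ((|α + β * m| + |β|) * (1 + |(j : ℝ)|)) * (K * ((q ^ 2) ^ m * (q ^ 2) ^ j)) * |th q t j| := by
          gcongr
      _ = C * (1 + |(j : ℝ)|) * (|th q t j| * (q ^ 2) ^ j) := by rw [hC]; ring
      _ ≤ C * (1 + |(j : ℝ)|) * ((q ^ 16)⁻¹ * q ^ j.natAbs) := by
          gcongr
      _ = _ := by unfold maj; ring
  have sd : Summable d := (hM.mul_left C).of_norm_bounded hdb
  have e : ∑' j : ℤ, (α + β * (m + j)) * cz b q (m + j) * th q t j =
      ∑' j, d j + cfInf b q * ((α + β * m) * thetaT q t + β * thetaU q t) := by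
    rw [thetaT, thetaU, ← tsum_mul_left, ← tsum_mul_left, ← (sT.mul_left _).tsum_add (sU.mul_left _),
      ← tsum_mul_left, ← sd.tsum_add (((sT.mul_left _).add (sU.mul_left _)).mul_left _)]
    refine tsum_congr fun j => ?_
    simp only [hd]
    ring
  rw [e, add_sub_cancel_right]
  have := tsum_of_norm_bounded (hM.mul_left C).hasSum hdb
  rw [tsum_mul_left] at this
  calc _ ≤ C * ∑' j, maj q j := this
    _ = _ := by rw [hC]; ring

/-- Recentring the series at its dominant index `k = m` when the argument is `q^{-2m} t`. -/
theorem shift {q b : ℝ} (hq0 : 0 < q) {t : ℝ} (ht : 0 < t) (α β : ℝ) (m : ℕ) :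
    ∑' k : ℕ, (α + β * k) * ((-1) ^ k * q ^ (k * (k + 1)) * cf b q k * (t / (q ^ 2) ^ m) ^ k) =
      (-1) ^ m * q ^ ((m : ℤ) - m * m) * t ^ m *
        ∑' j : ℤ, (α + β * (m + j)) * cz b q (m + j) * th q t j := by
  have hinj : Function.Injective fun k : ℕ => (k : ℤ) - m := fun x y h => by
    simp only at h; omega
  rw [← hinj.tsum_eq, ← tsum_mul_left]
  · refine tsum_congr fun k => ?_
    have e1 : (-1 : ℝ) ^ m * (-1) ^ ((k : ℤ) - m) = (-1) ^ k := by
      rw [← zpow_natCast, ← zpow_add₀ (by norm_num)]; simp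
    have e2 : q ^ ((m : ℤ) - m * m) * q ^ (((k : ℤ) - m) * ((k : ℤ) - m + 1)) =
        q ^ (k * (k + 1)) * (((q ^ 2) ^ m) ^ k)⁻¹ := by
      rw [← zpow_add₀ hq0.ne', ← pow_mul, ← pow_mul, ← zpow_natCast, ← zpow_natCast, ← zpow_neg,
        ← zpow_add₀ hq0.ne']
      congr 1
      push_cast
      ring
    have e3 : t ^ m * t ^ ((k : ℤ) - m) = t ^ k := by
      rw [← zpow_natCast, ← zpow_add₀ ht.ne']; simp
    have e4 : cz b q ((m : ℤ) + (k - m)) = cf b q k := by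
      simp [cz]
    rw [e4, th, div_pow, div_eq_mul_inv, ← e3, ← e1]
    push_cast
    linear_combination (-(α + β * k) * (-1 : ℝ) ^ m * (-1) ^ ((k : ℤ) - m) * cf b q k * t ^ m * t ^ ((k : ℤ) - m)) * e2
  · intro j hj
    by_contra h
    apply hj
    have : ¬ (0 ≤ (m : ℤ) + j) := fun h0 => h ⟨((m : ℤ) + j).toNat, by simp only; omega⟩
    simp [cz, this]

/-! ### The power series and Euler's product -/

/-- The series `∑_k (-1)^k q^{k(k+1)} y^k / ((b;q²)_k (q²;q²)_k)`. -/
noncomputable def Fser (b q y : ℝ) : ℝ := ∑' k : ℕ, (-1) ^ k * q ^ (k * (k + 1)) * cf b q k * y ^ k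

/-- Bound for the coefficients times `R^k`, where `R = q^{-2N}`; it rests on `(k - N)² ≥ 0`. -/
theorem Fser_term_bound {q b : ℝ} (hq0 : 0 < q) (hq1 : q < 1) (hb0 : 0 ≤ b) (hb1 : b < 1)
    (N k : ℕ) :
    |(-1) ^ k * q ^ (k * (k + 1)) * cf b q k| * (((q ^ 2) ^ N)⁻¹) ^ k ≤
      cfInf b q * (q ^ (N * N))⁻¹ * q ^ k := by
  obtain ⟨hI, h⟩ := cf_facts hq0 hq1 hb0 hb1
  obtain ⟨h1, h2, -⟩ := h k
  rw [abs_mul, abs_mul, abs_pow, abs_neg, abs_one, one_pow, one_mul, abs_of_pos h1,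
    abs_of_pos (by positivity)]
  have e : q ^ (k * (k + 1)) * (((q ^ 2) ^ N)⁻¹) ^ k ≤ (q ^ (N * N))⁻¹ * q ^ k := by
    rw [inv_pow, ← pow_mul, ← pow_mul, ← zpow_natCast, ← zpow_natCast, ← zpow_natCast,
      ← zpow_natCast, ← zpow_neg, ← zpow_neg, ← zpow_add₀ hq0.ne', ← zpow_add₀ hq0.ne']
    refine zpow_le_zpow_right_of_le_one₀ hq0 hq1.le ?_
    push_cast
    nlinarith [sq_nonneg ((k : ℤ) - N)]
  calc _ = cf b q k * (q ^ (k * (k + 1)) * (((q ^ 2) ^ N)⁻¹) ^ k) := by ring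
    _ ≤ cfInf b q * ((q ^ (N * N))⁻¹ * q ^ k) := by gcongr
    _ = _ := by ring

theorem exists_radius {q : ℝ} (hq0 : 0 < q) (hq1 : q < 1) (y : ℝ) :
    ∃ N : ℕ, |y| < ((q ^ 2) ^ N)⁻¹ := by
  have hp1 : q ^ 2 < 1 := pow_lt_one₀ hq0.le hq1 two_ne_zero
  obtain ⟨N, hN⟩ := exists_pow_lt_of_lt_one (show 0 < (|y| + 1)⁻¹ by positivity) hp1
  refine ⟨N, ?_⟩
  have := inv_strictAnti₀ (by positivity) hN
  rw [inv_inv] at this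
  linarith

theorem Fser_summable {q b : ℝ} (hq0 : 0 < q) (hq1 : q < 1) (hb0 : 0 ≤ b) (hb1 : b < 1) (y : ℝ) :
    Summable fun k : ℕ => (-1) ^ k * q ^ (k * (k + 1)) * cf b q k * y ^ k := by
  obtain ⟨N, hN⟩ := exists_radius hq0 hq1 y
  refine ((summable_geometric_of_lt_one hq0.le hq1).mul_left
    (cfInf b q * (q ^ (N * N))⁻¹)).of_norm_bounded fun k => ?_
  rw [Real.norm_eq_abs, abs_mul, abs_pow]
  refine le_trans ?_ (Fser_term_bound hq0 hq1 hb0 hb1 N k)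
  gcongr

theorem Fser_hasDerivAt {q b : ℝ} (hq0 : 0 < q) (hq1 : q < 1) (hb0 : 0 ≤ b) (hb1 : b < 1) (y : ℝ) :
    (Summable fun k : ℕ => (-1) ^ k * q ^ (k * (k + 1)) * cf b q k * (k * y ^ (k - 1))) ∧
    HasDerivAt (Fser b q)
      (∑' k : ℕ, (-1) ^ k * q ^ (k * (k + 1)) * cf b q k * (k * y ^ (k - 1))) y := by
  obtain ⟨N, hN⟩ := exists_radius hq0 hq1 y
  set R := ((q ^ 2) ^ N)⁻¹ with hR
  have hp1 : q ^ 2 < 1 := pow_lt_one₀ hq0.le hq1 two_ne_zero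
  have hR1 : 1 ≤ R := (one_le_inv₀ (by positivity)).2 (pow_le_one₀ (by positivity) hp1.le)
  have hs : Summable fun k : ℕ => cfInf b q * (q ^ (N * N))⁻¹ * ((k : ℝ) ^ 1 * q ^ k) :=
    (summable_pow_mul_geometric_of_norm_lt_one (R := ℝ) 1
      (r := q) (by rwa [Real.norm_of_nonneg hq0.le])).mul_left _
  have hb : ∀ (k : ℕ), ∀ x ∈ Metric.ball (0 : ℝ) R,
      ‖(-1) ^ k * q ^ (k * (k + 1)) * cf b q k * (k * x ^ (k - 1))‖ ≤
        cfInf b q * (q ^ (N * N))⁻¹ * ((k : ℝ) ^ 1 * q ^ k) := fun k x hx => by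
    rw [mem_ball_zero_iff, Real.norm_eq_abs] at hx
    rw [Real.norm_eq_abs, abs_mul, abs_mul (k : ℝ), abs_pow x, Nat.abs_cast]
    have h1 : |x| ^ (k - 1) ≤ R ^ k :=
      (pow_le_pow_left₀ (abs_nonneg x) hx.le _).trans (pow_le_pow_right₀ hR1 (Nat.sub_le k 1))
    calc _ ≤ |(-1) ^ k * q ^ (k * (k + 1)) * cf b q k| * (k * R ^ k) := by gcongr
      _ = (|(-1) ^ k * q ^ (k * (k + 1)) * cf b q k| * R ^ k) * k := by ring
      _ ≤ (cfInf b q * (q ^ (N * N))⁻¹ * q ^ k) * k :=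
          mul_le_mul_of_nonneg_right (Fser_term_bound hq0 hq1 hb0 hb1 N k) (Nat.cast_nonneg k)
      _ = _ := by ring
  have hy : y ∈ Metric.ball (0 : ℝ) R := by rwa [mem_ball_zero_iff, Real.norm_eq_abs]
  refine ⟨hs.of_norm_bounded fun k => hb k y hy, ?_⟩
  exact hasDerivAt_tsum_of_isPreconnected hs Metric.isOpen_ball
    (convex_ball (0 : ℝ) R).isPreconnected
    (fun k x _ => (hasDerivAt_pow k x).const_mul _) hb hy
    (Fser_summable hq0 hq1 hb0 hb1 y) hy

/-- `ν F + 2 y F'` as a single series. -/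
theorem Fser_euler {q b : ℝ} (hq0 : 0 < q) (hq1 : q < 1) (hb0 : 0 ≤ b) (hb1 : b < 1) (ν y : ℝ) :
    ν * Fser b q y + 2 * (y * deriv (Fser b q) y) =
      ∑' k : ℕ, (ν + 2 * k) * ((-1) ^ k * q ^ (k * (k + 1)) * cf b q k * y ^ k) := by
  obtain ⟨h1, h2⟩ := Fser_hasDerivAt hq0 hq1 hb0 hb1 y
  have h3 := Fser_summable hq0 hq1 hb0 hb1 y
  rw [h2.deriv, Fser, ← tsum_mul_left, ← tsum_mul_left, ← tsum_mul_left,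
    ← (h3.mul_left ν).tsum_add ((h1.mul_left y).mul_left 2)]
  refine tsum_congr fun k => ?_
  rcases k with _ | k
  · simp
  · simp only [Nat.add_sub_cancel, pow_succ y k]; ring

/-- Euler's functional equation, which makes `Fser 0 q y` the product `(q²y;q²)_∞`. -/
theorem Fser_zero_functional {q : ℝ} (hq0 : 0 < q) (hq1 : q < 1) (y : ℝ) :
    Fser 0 q y = (1 - q ^ 2 * y) * Fser 0 q (q ^ 2 * y) := by
  have hp0 : 0 < q ^ 2 := by positivity
  have hp1 : q ^ 2 < 1 := pow_lt_one₀ hq0.le hq1 two_ne_zero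
  have s1 := Fser_summable hq0 hq1 le_rfl zero_lt_one y
  have s2 := Fser_summable hq0 hq1 le_rfl zero_lt_one (q ^ 2 * y)
  have key : Fser 0 q y - Fser 0 q (q ^ 2 * y) = -(q ^ 2 * y) * Fser 0 q (q ^ 2 * y) := by
    rw [Fser, Fser, ← s1.tsum_sub s2, (s1.sub s2).tsum_eq_zero_add, ← tsum_mul_left]
    simp only [pow_zero, sub_self, zero_add]
    refine tsum_congr fun k => ?_
    have hc : cf 0 q k = cf 0 q (k + 1) * (1 - q ^ 2 * (q ^ 2) ^ k) := by
      have hP' : qPoch (q ^ 2) (q ^ 2) (k + 1) =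
          qPoch (q ^ 2) (q ^ 2) k * (1 - q ^ 2 * (q ^ 2) ^ k) := Finset.prod_range_succ _ _
      obtain ⟨hP, hPle, -, -⟩ := qPoch_facts hq0 hq1 hp0.le hp1
      have h1 := hP.trans_le (hPle k)
      have h2 := hP.trans_le (hPle (k + 1))
      have h0 : ∀ n, qPoch 0 (q ^ 2) n = 1 := fun n => by simp [qPoch]
      unfold cf
      rw [hP'] at h2 ⊢
      have h3 := (pos_iff_pos_of_mul_pos h2).1 h1
      rw [h0, h0]
      field_simp
    have e : q ^ ((k + 1) * (k + 1 + 1)) = q ^ (k * (k + 1)) * (q ^ 2) ^ k * q ^ 2 := by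
      rw [← pow_mul, ← pow_add, ← pow_add]
      congr 1
      ring
    rw [hc, e, mul_pow, mul_pow, pow_succ (q ^ 2) k, pow_succ y k, pow_succ (-1 : ℝ) k]
    ring
  linear_combination key

theorem Fser_at_zero {q : ℝ} : Fser 0 q 0 = 1 := by
  rw [Fser, tsum_eq_single 0]
  · simp [cf, qPoch]
  · intro k hk
    simp [hk]

/-- `Fser 0 q t = (q²t;q²)_∞ ≥ (q²;q²)_∞` for `t ≤ 1`. -/
theorem Fser_zero_lower {q t : ℝ} (hq0 : 0 < q) (hq1 : q < 1) (ht1 : t ≤ 1) :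
    qPochInf (q ^ 2) (q ^ 2) ≤ Fser 0 q t := by
  have hp0 : 0 < q ^ 2 := by positivity
  have hp1 : q ^ 2 < 1 := pow_lt_one₀ hq0.le hq1 two_ne_zero
  obtain ⟨hP, hPle, -, -⟩ := qPoch_facts hq0 hq1 hp0.le hp1
  have hprod : ∀ n : ℕ, Fser 0 q t = (∏ i ∈ Finset.range n, (1 - q ^ 2 * (q ^ 2) ^ i * t)) *
      Fser 0 q ((q ^ 2) ^ n * t) := fun n => by
    induction n with
    | zero => simp
    | succ n ih =>
      rw [ih, Finset.prod_range_succ, Fser_zero_functional hq0 hq1 ((q ^ 2) ^ n * t)]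
      have : q ^ 2 * ((q ^ 2) ^ n * t) = (q ^ 2) ^ (n + 1) * t := by ring
      rw [this]
      ring
  have hlow : ∀ n : ℕ, qPochInf (q ^ 2) (q ^ 2) ≤
      ∏ i ∈ Finset.range n, (1 - q ^ 2 * (q ^ 2) ^ i * t) := fun n => by
    refine (hPle n).trans (Finset.prod_le_prod (fun i _ => ?_) fun i _ => ?_)
    · have : (q ^ 2) ^ i ≤ 1 := pow_le_one₀ hp0.le hp1.le
      nlinarith
    · have : q ^ 2 * (q ^ 2) ^ i * t ≤ q ^ 2 * (q ^ 2) ^ i :=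
        mul_le_of_le_one_right (by positivity) ht1
      linarith
  have hlim : Tendsto (fun n : ℕ => qPochInf (q ^ 2) (q ^ 2) * Fser 0 q ((q ^ 2) ^ n * t)) atTop
      (𝓝 (qPochInf (q ^ 2) (q ^ 2) * 1)) := by
    refine Tendsto.const_mul _ ?_
    have hc := (Fser_hasDerivAt hq0 hq1 le_rfl zero_lt_one 0).2.continuousAt.tendsto
    rw [Fser_at_zero] at hc
    refine hc.comp ?_
    simpa using (tendsto_pow_atTop_nhds_zero_of_lt_one hp0.le hp1).mul_const t
  rw [mul_one] at hlim
  have hpos : ∀ᶠ n : ℕ in atTop, 0 < qPochInf (q ^ 2) (q ^ 2) * Fser 0 q ((q ^ 2) ^ n * t) :=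
    hlim.eventually (lt_mem_nhds hP)
  refine le_of_tendsto hlim (hpos.mono fun n hn => ?_)
  have h1 := (pos_iff_pos_of_mul_pos hn).1 hP
  rw [hprod n]
  exact mul_le_mul_of_nonneg_right (hlow n) h1.le

/-- The functional equation iterated `m` times, with the prefactor of `shift` extracted. -/
theorem Fser_zero_dilate {q t : ℝ} (hq0 : 0 < q) (hq1 : q < 1) (ht0 : 0 < t) (m : ℕ) :
    Fser 0 q (t / (q ^ 2) ^ m) = (-1) ^ m * q ^ ((m : ℤ) - m * m) * t ^ m *
      ((∏ l ∈ Finset.range m, (1 - (q ^ 2) ^ l / t)) * Fser 0 q t) := by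
  induction m with
  | zero => simp
  | succ m ih =>
    have e1 : q ^ 2 * (t / (q ^ 2) ^ (m + 1)) = t / (q ^ 2) ^ m := by
      rw [pow_succ' (q ^ 2) m]
      field_simp
    have e2 : q ^ (((m + 1 : ℕ) : ℤ) - (m + 1 : ℕ) * (m + 1 : ℕ)) =
        q ^ ((m : ℤ) - m * m) * ((q ^ 2) ^ m)⁻¹ := by
      rw [← pow_mul, ← zpow_natCast, ← zpow_neg, ← zpow_add₀ hq0.ne']
      congr 1
      push_cast
      ring
    rw [Fser_zero_functional hq0 hq1, e1, ih, e2, Finset.prod_range_succ]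
    field_simp
    ring

/-! ### Sign of the theta series -/

/-- The Jacobi triple product as a limit: `(1/t;q²)_m (q²t;q²)_∞` tends to
`thetaT q t / (q²;q²)_∞`. It follows by comparing `shift` with `Fser_zero_dilate` at `b = 0`. -/
theorem theta_limit {q t : ℝ} (hq0 : 0 < q) (hq1 : q < 1) (h1 : q ^ 2 ≤ t) (h2 : t ≤ 1) :
    Tendsto (fun m : ℕ => (∏ l ∈ Finset.range m, (1 - (q ^ 2) ^ l / t)) * Fser 0 q t) atTop
      (𝓝 (cfInf 0 q * thetaT q t)) := by
  have hp0 : 0 < q ^ 2 := by positivity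
  have hp1 : q ^ 2 < 1 := pow_lt_one₀ hq0.le hq1 two_ne_zero
  have ht0 : 0 < t := hp0.trans_le h1
  have h1' : q ^ 3 ≤ t := (pow_le_pow_of_le_one hq0.le hq1.le (by norm_num)).trans h1
  have h2' : t ≤ (q ^ 3)⁻¹ := h2.trans ((one_le_inv₀ (by positivity)).2 (pow_le_one₀ hq0.le hq1.le))
  have hS : ∀ m : ℕ, ∑' j : ℤ, ((1 : ℝ) + 0 * (m + j)) * cz 0 q (m + j) * th q t j =
      (∏ l ∈ Finset.range m, (1 - (q ^ 2) ^ l / t)) * Fser 0 q t := fun m => by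
    have ha := shift (b := 0) hq0 ht0 1 0 m
    have hb := Fser_zero_dilate hq0 hq1 ht0 m
    have hc : ∑' k : ℕ, ((1 : ℝ) + 0 * k) * ((-1) ^ k * q ^ (k * (k + 1)) * cf 0 q k *
        (t / (q ^ 2) ^ m) ^ k) = Fser 0 q (t / (q ^ 2) ^ m) :=
      tsum_congr fun k => by ring
    rw [hc, hb] at ha
    have hne : (-1 : ℝ) ^ m * q ^ ((m : ℤ) - m * m) * t ^ m ≠ 0 :=
      mul_ne_zero (mul_ne_zero (pow_ne_zero _ (by norm_num)) (zpow_ne_zero _ hq0.ne'))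
        (pow_ne_zero _ ht0.ne')
    exact (mul_left_cancel₀ hne ha).symm
  rw [tendsto_iff_norm_sub_tendsto_zero]
  refine squeeze_zero (g := fun m : ℕ => (1 * (2 * cfInf 0 q / (1 - q ^ 2)) * ∑' j, maj q j) *
    (q ^ 2) ^ m) (fun _ => norm_nonneg _) (fun m => ?_) ?_
  · have := approx hq0 hq1 le_rfl zero_lt_one h1' h2' 1 0 m
    rw [hS] at this
    simpa using this
  · have := (tendsto_pow_atTop_nhds_zero_of_lt_one hp0.le hp1).const_mul
      (1 * (2 * cfInf 0 q / (1 - q ^ 2)) * ∑' j, maj q j)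
    rwa [mul_zero] at this

/-- The theta series vanishes at `t = q²` and is negative on `(q²,1)`, with at most a simple zero at
each endpoint. -/
theorem theta_neg {q : ℝ} (hq0 : 0 < q) (hq1 : q < 1) :
    thetaT q (q ^ 2) = 0 ∧
    ∃ c : ℝ, 0 < c ∧ ∀ t, q ^ 2 ≤ t → t ≤ 1 → thetaT q t ≤ -(c * ((1 - t) * (t - q ^ 2))) := by
  have hp0 : 0 < q ^ 2 := by positivity
  have hp1 : q ^ 2 < 1 := pow_lt_one₀ hq0.le hq1 two_ne_zero
  obtain ⟨hP, hPle, -, -⟩ := qPoch_facts hq0 hq1 hp0.le hp1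
  have hI := (cf_facts hq0 hq1 le_rfl zero_lt_one).1
  have hsplit : ∀ (t : ℝ) (n : ℕ), ∏ l ∈ Finset.range (n + 2), (1 - (q ^ 2) ^ l / t) =
      (∏ l ∈ Finset.range n, (1 - (q ^ 2) ^ (l + 2) / t)) * ((1 - q ^ 2 / t) * (1 - 1 / t)) :=
    fun t n => by
      rw [Finset.prod_range_succ', Finset.prod_range_succ']
      simp only [pow_zero, zero_add, pow_one]
      ring
  constructor
  · have hl := (theta_limit hq0 hq1 le_rfl hp1.le).comp (tendsto_add_atTop_nat 2)
    have h0 : cfInf 0 q * thetaT q (q ^ 2) = 0 := by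
      refine tendsto_nhds_unique hl (tendsto_const_nhds.congr fun n => ?_)
      simp only [Function.comp, hsplit]
      rw [div_self hp0.ne']
      ring
    exact (mul_eq_zero.1 h0).resolve_left hI.ne'
  · set P := qPochInf (q ^ 2) (q ^ 2) with hPdef
    refine ⟨P * P / cfInf 0 q, by positivity, fun t h1 h2 => ?_⟩
    have ht0 : 0 < t := hp0.trans_le h1
    have hl := (theta_limit hq0 hq1 h1 h2).comp (tendsto_add_atTop_nat 2)
    have hF := Fser_zero_lower hq0 hq1 h2
    have hle : cfInf 0 q * thetaT q t ≤ -(P * P * ((1 - t) * (t - q ^ 2))) := by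
      refine le_of_tendsto' hl fun n => ?_
      simp only [Function.comp, hsplit]
      have hA : P ≤ ∏ l ∈ Finset.range n, (1 - (q ^ 2) ^ (l + 2) / t) := by
        refine (hPle n).trans (Finset.prod_le_prod (fun i _ => ?_) fun i _ => ?_)
        · have : (q ^ 2) ^ i ≤ 1 := pow_le_one₀ hp0.le hp1.le
          nlinarith
        · have : (q ^ 2) ^ (i + 2) / t ≤ q ^ 2 * (q ^ 2) ^ i := by
            rw [div_le_iff₀ ht0]
            calc (q ^ 2) ^ (i + 2) = q ^ 2 * (q ^ 2) ^ i * q ^ 2 := by ring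
              _ ≤ _ := by gcongr
          linarith
      have hPF : P * P ≤ (∏ l ∈ Finset.range n, (1 - (q ^ 2) ^ (l + 2) / t)) * Fser 0 q t :=
        mul_le_mul hA hF hP.le (hP.le.trans hA)
      have hB : (1 - q ^ 2 / t) * (1 - 1 / t) ≤ -((1 - t) * (t - q ^ 2)) := by
        have e : (1 - q ^ 2 / t) * (1 - 1 / t) = -((1 - t) * (t - q ^ 2)) / t ^ 2 := by
          field_simp
          ring
        have h3 : 0 ≤ (1 - t) * (t - q ^ 2) := mul_nonneg (by linarith) (by linarith)
        rw [e, div_le_iff₀ (by positivity)]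
        have : t ^ 2 ≤ 1 := pow_le_one₀ ht0.le h2
        nlinarith
      have h3 : 0 ≤ (1 - t) * (t - q ^ 2) := mul_nonneg (by linarith) (by linarith)
      have hPP : 0 < P * P := by positivity
      generalize (∏ l ∈ Finset.range n, (1 - (q ^ 2) ^ (l + 2) / t)) = A at *
      generalize Fser 0 q t = F at *
      generalize (1 - q ^ 2 / t) * (1 - 1 / t) = B at *
      generalize (1 - t) * (t - q ^ 2) = D at *
      nlinarith
    rw [div_mul_eq_mul_div, ← neg_div, le_div_iff₀ hI]
    linarith

theorem thetaU_continuousOn {q : ℝ} (hq0 : 0 < q) (hq1 : q < 1) :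
    ContinuousOn (thetaU q) (Set.Icc (q ^ 3) (q ^ 3)⁻¹) := by
  refine continuousOn_tsum (u := maj q) (fun j => ?_) (maj_summable hq0 hq1)
    fun j t ht => (th_maj hq0 hq1 ht.1 ht.2 j).2
  unfold th
  refine continuousOn_const.mul (continuousOn_const.mul ?_)
  exact continuousOn_id.zpow₀ j fun t ht => Or.inl (lt_of_lt_of_le (by positivity) ht.1).ne'

theorem thetaT_hasDerivAt {q t : ℝ} (hq0 : 0 < q) (hq1 : q < 1) (h1 : q ^ 3 < t)
    (h2 : t < (q ^ 3)⁻¹) : HasDerivAt (thetaT q) (thetaU q t / t) t := by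
  have hq3 : 0 < q ^ 3 := by positivity
  have ht : t ∈ Set.Ioo (q ^ 3) (q ^ 3)⁻¹ := ⟨h1, h2⟩
  have hM := maj_summable hq0 hq1
  have h := hasDerivAt_tsum_of_isPreconnected (g := fun (j : ℤ) x => th q x j)
    (g' := fun (j : ℤ) x => ((j : ℝ) * th q x j) / x) (u := fun j => maj q j / q ^ 3)
    (hM.div_const _) isOpen_Ioo isPreconnected_Ioo (fun j x hx => ?_) (fun j x hx => ?_) ht
    (hM.of_norm_bounded fun j => (th_maj hq0 hq1 h1.le h2.le j).1) ht
  · rw [tsum_div_const] at h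
    exact h
  · have hx0 : x ≠ 0 := (hq3.trans hx.1).ne'
    have := (hasDerivAt_zpow j x (Or.inl hx0)).const_mul ((-1 : ℝ) ^ j * q ^ (j * (j + 1)))
    refine this.congr_deriv ?_
    rw [th, zpow_sub_one₀ hx0]
    field_simp
  · have h0 := (th_maj hq0 hq1 hx.1.le hx.2.le j).2
    rw [norm_div, Real.norm_of_nonneg (hq3.trans hx.1).le]
    exact div_le_div₀ ((norm_nonneg _).trans h0) h0 hq3 hx.1.le

/-- `thetaT` decreases at a linear rate from its zero at `t = q²`, so its derivative there is
negative. -/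
theorem thetaU_neg {q : ℝ} (hq0 : 0 < q) (hq1 : q < 1) : thetaU q (q ^ 2) < 0 := by
  have hp0 : 0 < q ^ 2 := by positivity
  have hp1 : q ^ 2 < 1 := pow_lt_one₀ hq0.le hq1 two_ne_zero
  obtain ⟨hT0, c, hc, hT⟩ := theta_neg hq0 hq1
  have h1 : q ^ 3 < q ^ 2 := pow_lt_pow_right_of_lt_one₀ hq0 hq1 (by norm_num)
  have h2 : q ^ 2 < (q ^ 3)⁻¹ :=
    hp1.trans_le ((one_le_inv₀ (by positivity)).2 (pow_le_one₀ hq0.le hq1.le))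
  have hd := (thetaT_hasDerivAt hq0 hq1 h1 h2).hasDerivWithinAt (s := Set.Ioi (q ^ 2))
  rw [hasDerivWithinAt_iff_tendsto_slope' (by simp)] at hd
  have hl : Tendsto (fun t : ℝ => -(c * (1 - t))) (𝓝[>] (q ^ 2)) (𝓝 (-(c * (1 - q ^ 2)))) := by
    refine Tendsto.mono_left (Continuous.tendsto ?_ _) nhdsWithin_le_nhds
    fun_prop
  have hle : thetaU q (q ^ 2) / q ^ 2 ≤ -(c * (1 - q ^ 2)) := by
    refine le_of_tendsto_of_tendsto hd hl ?_
    filter_upwards [Ioo_mem_nhdsGT hp1] with t ht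
    have hpos : 0 < t - q ^ 2 := sub_pos.2 ht.1
    rw [slope_def_field, hT0, sub_zero, div_le_iff₀ hpos]
    have := hT t ht.1.le ht.2.le
    linarith
  have : 0 < c * (1 - q ^ 2) := mul_pos hc (by linarith)
  rw [div_le_iff₀ hp0] at hle
  nlinarith

/-! ### Derivative of the q-Bessel function -/

theorem qBessel_deriv {q ν z : ℝ} (hq0 : 0 < q) (hq1 : q < 1) (hν : -1 < ν) (hz : 0 < z) :
    deriv (qBessel ν q) z =
      z ^ (ν - 1) * (qPochInf (q ^ (2 * (ν + 1))) (q ^ 2) / qPochInf (q ^ 2) (q ^ 2)) *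
        ∑' k : ℕ, (ν + 2 * k) * ((-1) ^ k * q ^ (k * (k + 1)) * cf (q ^ (2 * (ν + 1))) q k *
          (z ^ 2) ^ k) := by
  set b := q ^ (2 * (ν + 1)) with hb
  have hb0 : 0 ≤ b := by positivity
  have hb1 : b < 1 := Real.rpow_lt_one hq0.le hq1 (by linarith)
  set C := qPochInf b (q ^ 2) / qPochInf (q ^ 2) (q ^ 2) with hC
  have hfun : qBessel ν q = fun x => x ^ ν * C * Fser b q (x ^ 2) := by
    funext x
    unfold qBessel Fser
    congr 1
    refine tsum_congr fun k => ?_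
    rw [cf, pow_mul]
    ring
  have h1 := (Real.hasDerivAt_rpow_const (p := ν) (Or.inl hz.ne')).mul_const C
  have h2 := (Fser_hasDerivAt hq0 hq1 hb0 hb1 (z ^ 2)).2.differentiableAt.hasDerivAt
  have h3 : HasDerivAt (fun x => Fser b q (x ^ 2))
      (deriv (Fser b q) (z ^ 2) * ((2 : ℕ) * z ^ (2 - 1))) z := 
    HasDerivAt.comp (h₂ := Fser b q) (h := fun x : ℝ => x ^ 2) z h2 (hasDerivAt_pow 2 z)
  have h4 : HasDerivAt (fun x => x ^ ν * C * Fser b q (x ^ 2)) _ z := h1.mul h3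
  rw [hfun, h4.deriv, ← Fser_euler hq0 hq1 hb0 hb1, Real.rpow_sub_one hz.ne']
  field_simp
  push_cast
  ring

/-- The limiting theta combination stays below a negative constant along the sequence. -/
theorem main_term {q ν : ℝ} (hq0 : 0 < q) (hq1 : q < 1) (hν : -1 < ν)
    (θ : ℕ → ℝ) (hθ : ∀ m, 1 ≤ m → 0 ≤ θ m ∧ θ m < 1)
    (hlim : Tendsto (fun m : ℕ => (m : ℝ) * θ m) atTop atTop) :
    ∃ u : ℝ, 0 < u ∧ ∀ᶠ m : ℕ in atTop,
      (ν + 2 * m) * thetaT q (q ^ (2 * θ m)) + 2 * thetaU q (q ^ (2 * θ m)) ≤ -u := by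
  have hp0 : 0 < q ^ 2 := by positivity
  have hp1 : q ^ 2 < 1 := pow_lt_one₀ hq0.le hq1 two_ne_zero
  obtain ⟨-, c, hc, hT⟩ := theta_neg hq0 hq1
  have hU := thetaU_neg hq0 hq1
  have h1 : q ^ 3 < q ^ 2 := pow_lt_pow_right_of_lt_one₀ hq0 hq1 (by norm_num)
  have h13 : 1 ≤ (q ^ 3)⁻¹ := (one_le_inv₀ (by positivity)).2 (pow_le_one₀ hq0.le hq1.le)
  set D := ∑' j, maj q j
  have hUD : ∀ t, q ^ 2 ≤ t → t ≤ 1 → thetaU q t ≤ D := fun t ha hb =>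
    (le_abs_self _).trans (tsum_of_norm_bounded (maj_summable hq0 hq1).hasSum fun j =>
      (th_maj hq0 hq1 (h1.le.trans ha) (hb.trans h13) j).2)
  -- Near `t = q²`, where `thetaT` may be arbitrarily small, `thetaU` alone is negative enough.
  obtain ⟨δ, hδ, hUδ⟩ : ∃ δ : ℝ, 0 < δ ∧ ∀ t, q ^ 2 ≤ t → t < q ^ 2 + δ →
      thetaU q t ≤ thetaU q (q ^ 2) / 2 := by
    have hcont : ContinuousAt (thetaU q) (q ^ 2) :=
      (thetaU_continuousOn hq0 hq1).continuousAt (Icc_mem_nhds h1 (hp1.trans_le h13))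
    have := hcont.tendsto.eventually (gt_mem_nhds (show thetaU q (q ^ 2) < thetaU q (q ^ 2) / 2 by
      linarith))
    obtain ⟨δ, hδ, h⟩ := Metric.eventually_nhds_iff.1 this
    refine ⟨δ, hδ, fun t ha hb => (h ?_).le⟩
    rw [Real.dist_eq, abs_of_nonneg (by linarith)]
    linarith
  refine ⟨-thetaU q (q ^ 2), by linarith, ?_⟩
  have hk : 0 < c * δ * (1 - q ^ 2) := by
    have : 0 < 1 - q ^ 2 := by linarith
    positivity
  filter_upwards [eventually_ge_atTop 1,
    hlim.eventually_ge_atTop ((2 * D - thetaU q (q ^ 2)) / (c * δ * (1 - q ^ 2)))] with m hm hmθ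
  obtain ⟨hθ0, hθ1⟩ := hθ m hm
  have hm1 : (1 : ℝ) ≤ m := by exact_mod_cast hm
  set t := q ^ (2 * θ m) with ht
  have htp : t = (q ^ 2) ^ (θ m) := by
    rw [ht, Real.rpow_mul hq0.le]; norm_cast
  have ht1 : t ≤ 1 := Real.rpow_le_one hq0.le hq1.le (by linarith)
  have ht2 : q ^ 2 ≤ t := by
    rw [htp]
    simpa using Real.rpow_le_rpow_of_exponent_ge hp0 hp1.le hθ1.le
  -- Bernoulli's inequality for `t = (q²)^θ`.
  have hconc : (1 - q ^ 2) * θ m ≤ 1 - t := by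
    have := rpow_one_add_le_one_add_mul_self (s := q ^ 2 - 1) (p := θ m) (by linarith) hθ0 hθ1.le
    rw [add_sub_cancel, ← htp] at this
    linarith
  have hTt := hT t ht2 ht1
  have hnm : (m : ℝ) ≤ ν + 2 * m := by linarith
  rcases lt_or_ge t (q ^ 2 + δ) with hcase | hcase
  · have h0 : 0 ≤ c * ((1 - t) * (t - q ^ 2)) :=
      mul_nonneg hc.le (mul_nonneg (by linarith) (by linarith))
    have := hUδ t ht2 hcase
    have : (ν + 2 * m) * thetaT q t ≤ 0 :=
      mul_nonpos_of_nonneg_of_nonpos (by linarith) (by linarith)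
    linarith
  · have hUt := hUD t ht2 ht1
    rw [div_le_iff₀ hk] at hmθ
    have hA : c * δ * (1 - q ^ 2) * θ m ≤ -thetaT q t := by
      have : (1 - q ^ 2) * θ m * δ ≤ (1 - t) * (t - q ^ 2) :=
        mul_le_mul hconc (by linarith) hδ.le (by linarith)
      have := mul_le_mul_of_nonneg_left this hc.le
      linarith
    have hA0 : 0 ≤ c * δ * (1 - q ^ 2) * θ m := mul_nonneg hk.le hθ0
    have hB : (m : ℝ) * (c * δ * (1 - q ^ 2) * θ m) ≤ (ν + 2 * m) * -thetaT q t :=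
      mul_le_mul hnm hA hA0 (by linarith)
    linarith

theorem stmt1 (q ν : ℝ) (hq0 : 0 < q) (hq1 : q < 1) (hν : -1 < ν)
    (θ : ℕ → ℝ) (hθ : ∀ m, 1 ≤ m → 0 ≤ θ m ∧ θ m < 1)
    (hlim : Tendsto (fun m : ℕ => (m : ℝ) * θ m) atTop atTop) :
    ∃ M : ℕ, ∀ m, M ≤ m →
      0 < (-1 : ℝ) ^ (m - 1) * deriv (qBessel ν q) (q ^ (-(m : ℝ) + θ m)) := by
  have hp0 : 0 < q ^ 2 := by positivity
  have hp1 : q ^ 2 < 1 := pow_lt_one₀ hq0.le hq1 two_ne_zero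
  set b := q ^ (2 * (ν + 1)) with hb
  have hb0 : 0 ≤ b := by positivity
  have hb1 : b < 1 := Real.rpow_lt_one hq0.le hq1 (by linarith)
  have hI := (cf_facts hq0 hq1 hb0 hb1).1
  have hB := (qPoch_facts hq0 hq1 hb0 hb1).1
  have hP := (qPoch_facts hq0 hq1 hp0.le hp1).1
  obtain ⟨u, hu, hmain⟩ := main_term hq0 hq1 hν θ hθ hlim
  have herr : Tendsto (fun m : ℕ => (|ν + 2 * m| + |2|) * (2 * cfInf b q / (1 - q ^ 2)) *
      (∑' j, maj q j) * (q ^ 2) ^ m) atTop (𝓝 0) := by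
    have ha := tendsto_self_mul_const_pow_of_lt_one hp0.le hp1
    have hb := tendsto_pow_atTop_nhds_zero_of_lt_one hp0.le hp1
    have := ((ha.const_mul 2).add (hb.const_mul (ν + 2))).const_mul
      (2 * cfInf b q / (1 - q ^ 2) * ∑' j, maj q j)
    simp only [mul_zero, add_zero] at this
    refine this.congr' ?_
    filter_upwards [eventually_ge_atTop 1] with m hm
    have hm1 : (1 : ℝ) ≤ m := by exact_mod_cast hm
    rw [abs_of_nonneg (by linarith), abs_two]
    ring
  have hev := hmain.and ((herr.eventually (gt_mem_nhds (mul_pos hI hu))).and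
    (eventually_ge_atTop 1))
  obtain ⟨M, hM⟩ := eventually_atTop.1 hev
  refine ⟨M, fun m hm => ?_⟩
  obtain ⟨h1, h2, h3⟩ := hM m hm
  obtain ⟨hθ0, hθ1⟩ := hθ m h3
  set t := q ^ (2 * θ m) with ht
  have ht0 : 0 < t := by positivity
  have ht1 : t ≤ 1 := Real.rpow_le_one hq0.le hq1.le (by linarith)
  have ht2 : q ^ 3 ≤ t := by
    have := Real.rpow_le_rpow_of_exponent_ge hq0 hq1.le (show 2 * θ m ≤ (3 : ℕ) by
      push_cast; linarith)
    rwa [Real.rpow_natCast] at this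
  have ht3 : t ≤ (q ^ 3)⁻¹ :=
    ht1.trans ((one_le_inv₀ (by positivity)).2 (pow_le_one₀ hq0.le hq1.le))
  set z := q ^ (-(m : ℝ) + θ m) with hz
  have hz0 : 0 < z := by positivity
  have hz2 : z ^ 2 = t / (q ^ 2) ^ m := by
    rw [hz, ht, ← Real.rpow_natCast, ← Real.rpow_mul hq0.le, ← pow_mul, ← Real.rpow_natCast,
      ← Real.rpow_sub hq0]
    congr 1
    push_cast
    ring
  rw [qBessel_deriv hq0 hq1 hν hz0, ← hb, hz2, shift hq0 ht0]
  have hap := approx hq0 hq1 hb0 hb1 ht2 ht3 ν 2 m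
  set S := ∑' j : ℤ, (ν + 2 * (m + j)) * cz b q (m + j) * th q t j
  have hS : S < 0 := by
    have := (abs_le.1 hap).2
    have := mul_le_mul_of_nonneg_left h1 hI.le
    linarith
  have hsign : (-1 : ℝ) ^ (m - 1) * (-1) ^ m = -1 := by
    obtain ⟨n, rfl⟩ : ∃ n, m = n + 1 := ⟨m - 1, by omega⟩
    rw [Nat.add_sub_cancel, ← pow_add, show n + (n + 1) = 2 * n + 1 by ring, pow_succ, pow_mul]
    simp
  have hpos : 0 < z ^ (ν - 1) * (qPochInf b (q ^ 2) / qPochInf (q ^ 2) (q ^ 2)) *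
      (q ^ ((m : ℤ) - m * m) * t ^ m) := by positivity
  calc 0 < z ^ (ν - 1) * (qPochInf b (q ^ 2) / qPochInf (q ^ 2) (q ^ 2)) *
      (q ^ ((m : ℤ) - m * m) * t ^ m) * -S := mul_pos hpos (neg_pos.2 hS)
    _ = _ := by linear_combination (-(z ^ (ν - 1) * (qPochInf b (q ^ 2) / qPochInf (q ^ 2) (q ^ 2)) *
      (q ^ ((m : ℤ) - m * m) * t ^ m) * S)) * hsign
end
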